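/- arXiv:1702.00779 — 4 statements merged into one kernel-verified Lean document; each statement's English description precedes it below -/
import Mathlib

section
/- Let k be a field, p ∈ k[t] an irreducible polynomial, and k_p = k[t]/(p) the residue field. If v ∈ k[t][x,y] is a variable of the k(t)-algebra k(t)[x,y] (i.e., some k(t)-algebra automorphism of k(t)[x,y] sends v to x), then the class v₀ of v in k_p[x,y] (obtained by reducing coefficients modulo p) belongs to the subalgebra k_p[w] for some variable w of the k_p-algebra k_p[x,y]. -/
open MvPolynomial

noncomputable section

/-!
The polynomials in `K[w]`, for `w` a variable of `K[x, y]`, are exactly those fixed by a nonconstant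
polynomial family `φ_s` of endomorphisms with `φ_0 = id`. Unlike automorphisms, such families
survive reduction modulo `p`: rescaling `s` by a suitable fractional power of `p` makes them
integral with a nonconstant reduction. The same specialisation argument, applied to the degeneration
of a polynomial to its leading form, shows that leading forms of invariants are invariant.

Let `f` be invariant, involve both variables and have `x`-degree `m` at most its `y`-degree `n`.
Write `m : n = b : a` in lowest terms. The leading form of `f` for the weights `(a, b)` is
invariant, and it has the shape `c (x ^ b - l y ^ a) ^ g`, because the leading coefficients in `s`
of `φ_s (x) ^ b` and `φ_s (y) ^ a` are proportional by a constant, which leaves room for only one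
factor. Then `x ^ b - l y ^ a` is itself invariant, and Mason–Stothers (in the wild case, a
derivation) forces `b = 1`. So a shear `x ↦ x + l y ^ a` lowers the degree of `f`, and by descent an
automorphism brings `f` into a polynomial ring in one variable.
-/

open scoped Polynomial

section Deformation

variable {K B B' : Type*} [CommRing K] [CommRing B] [Algebra K B] [CommRing B'] [Algebra K B']

/-- A polynomial deformation of the identity: a polynomial family `g ↦ φ g ∈ B[s]` of
endomorphisms of the `K`-algebra `B` that specialises to the identity at `s = 0`. No group law in
`s` is required, so this is weaker than an action of the additive group. -/
def IsDeformation (φ : B →ₐ[K] B[X]) : Prop :=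
  ∀ g, (φ g).eval 0 = g

variable (K) in
/-- `f` is fixed by some polynomial deformation of the identity of `B` other than the constant
one. -/
def IsDeformationInvariant (f : B) : Prop :=
  ∃ φ : B →ₐ[K] B[X], IsDeformation φ ∧ (∃ g, φ g ≠ Polynomial.C g) ∧ φ f = Polynomial.C f

namespace IsDeformation

variable {φ : B →ₐ[K] B[X]}

theorem coeff_zero (hφ : IsDeformation φ) (g : B) : (φ g).coeff 0 = g := by
  rw [Polynomial.coeff_zero_eq_eval_zero, hφ]

theorem ne_zero (hφ : IsDeformation φ) {g : B} (hg : g ≠ 0) : φ g ≠ 0 := fun h ↦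
  hg <| by rw [← hφ g, h, Polynomial.eval_zero]

theorem eq_C_of_natDegree_eq_zero (hφ : IsDeformation φ) {g : B} (h : (φ g).natDegree = 0) :
    φ g = Polynomial.C g := by
  rw [Polynomial.eq_C_of_natDegree_eq_zero h, hφ.coeff_zero]

theorem eq_C_of_dvd [NoZeroDivisors B] (hφ : IsDeformation φ) {f g : B} (hf0 : f ≠ 0)
    (hf : φ f = Polynomial.C f) (hgf : g ∣ f) : φ g = Polynomial.C g := by
  obtain ⟨h, rfl⟩ := hgf
  have hdeg : (φ g).natDegree + (φ h).natDegree = 0 := by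
    rw [← Polynomial.natDegree_mul (hφ.ne_zero (left_ne_zero_of_mul hf0))
      (hφ.ne_zero (right_ne_zero_of_mul hf0)), ← map_mul, hf, Polynomial.natDegree_C]
  exact hφ.eq_C_of_natDegree_eq_zero (Nat.eq_zero_of_add_eq_zero_right hdeg)

end IsDeformation

namespace IsDeformationInvariant

theorem map_algEquiv {f : B} (hf : IsDeformationInvariant K f) (e : B ≃ₐ[K] B') :
    IsDeformationInvariant K (e f) := by
  obtain ⟨φ, hφ, ⟨g, hg⟩, hφf⟩ := hf
  let ψ : B' →ₐ[K] B'[X] := (Polynomial.mapAlgHom (e : B →ₐ[K] B')).comp (φ.comp e.symm)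
  have hψ (h : B) : ψ (e h) = (φ h).map (e : B →+* B') := by simp [ψ]
  refine ⟨ψ, fun h ↦ ?_, ⟨e g, fun hc ↦ hg ?_⟩, ?_⟩
  · obtain ⟨h, rfl⟩ := e.surjective h
    rw [hψ, ← Polynomial.coeff_zero_eq_eval_zero, Polynomial.coeff_map, hφ.coeff_zero]
    rfl
  · apply Polynomial.map_injective (e : B →+* B') e.injective
    rw [← hψ, hc, Polynomial.map_C]
    rfl
  · rw [hψ, hφf, Polynomial.map_C]
    rfl

theorem of_mem_adjoin {f g : B} (hf : IsDeformationInvariant K f)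
    (hg : g ∈ Algebra.adjoin K {f}) : IsDeformationInvariant K g := by
  obtain ⟨φ, hφ, hne, hφf⟩ := hf
  refine ⟨φ, hφ, hne, ?_⟩
  have hle : Algebra.adjoin K {f} ≤
      AlgHom.equalizer φ ((Polynomial.CAlgHom : B →ₐ[B] B[X]).restrictScalars K) :=
    Algebra.adjoin_le (Set.singleton_subset_iff.2 hφf)
  exact hle hg

end IsDeformationInvariant

end Deformation

section MvPolynomialDeformation

variable {σ K : Type*} [CommRing K]

theorem isDeformation_aeval {P : σ → (MvPolynomial σ K)[X]} (hP : ∀ i, (P i).eval 0 = X i) :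
    IsDeformation (aeval P : MvPolynomial σ K →ₐ[K] _) := fun g ↦ by
  have h : ((Polynomial.aeval 0).restrictScalars K).comp (aeval P) =
      AlgHom.id K (MvPolynomial σ K) :=
    MvPolynomial.algHom_ext fun i ↦ by simpa [Polynomial.coe_aeval_eq_eval] using hP i
  simpa [Polynomial.coe_aeval_eq_eval] using DFunLike.congr_fun h g

theorem exists_X_ne_C_of_ne_C {φ : MvPolynomial σ K →ₐ[K] (MvPolynomial σ K)[X]}
    {g : MvPolynomial σ K} (hg : φ g ≠ Polynomial.C g) : ∃ i, φ (X i) ≠ Polynomial.C (X i) := by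
  contrapose! hg
  have h : φ = (Polynomial.CAlgHom : MvPolynomial σ K →ₐ[MvPolynomial σ K] _).restrictScalars K :=
    MvPolynomial.algHom_ext fun i ↦ hg i
  rw [h]
  rfl

theorem isDeformationInvariant_iff_exists_aeval {f : MvPolynomial σ K} :
    IsDeformationInvariant K f ↔ ∃ P : σ → (MvPolynomial σ K)[X],
      (∀ i, (P i).eval 0 = X i) ∧ (∃ i, P i ≠ Polynomial.C (X i)) ∧
        aeval P f = Polynomial.C f := by
  refine ⟨fun ⟨φ, hφ, ⟨g, hg⟩, hf⟩ ↦ ⟨fun i ↦ φ (X i), fun i ↦ hφ _, exists_X_ne_C_of_ne_C hg, ?_⟩,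
    fun ⟨P, hP, ⟨i, hi⟩, hf⟩ ↦
      ⟨aeval P, isDeformation_aeval hP, ⟨X i, by rwa [aeval_X]⟩, hf⟩⟩
  rw [← hf]
  exact (DFunLike.congr_fun (aeval_unique φ) f).symm

theorem map_map_aeval {R S : Type*} [CommRing R] [CommRing S] (f : R →+* S)
    (P : σ → (MvPolynomial σ R)[X]) (g : MvPolynomial σ R) :
    (aeval P g).map (MvPolynomial.map f) =
      aeval (fun i ↦ (P i).map (MvPolynomial.map f)) (MvPolynomial.map f g) := by
  induction g using MvPolynomial.induction_on with
  | C a => simp [Polynomial.algebraMap_apply, MvPolynomial.algebraMap_eq]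
  | add p q hp hq => simp only [map_add, Polynomial.map_add, hp, hq]
  | mul_X p i hp => simp only [map_mul, Polynomial.map_mul, hp, aeval_X, map_X]

theorem IsDeformationInvariant.map_of_injective {L : Type*} [CommRing L] {j : K →+* L}
    (hj : Function.Injective j) {f : MvPolynomial σ K} (hf : IsDeformationInvariant K f) :
    IsDeformationInvariant L (MvPolynomial.map j f) := by
  rw [isDeformationInvariant_iff_exists_aeval] at hf ⊢
  obtain ⟨P, hP, ⟨i, hi⟩, hf⟩ := hf
  refine ⟨fun i ↦ (P i).map (MvPolynomial.map j), fun i ↦ ?_, ⟨i, fun hc ↦ hi ?_⟩, ?_⟩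
  · rw [← Polynomial.coeff_zero_eq_eval_zero, Polynomial.coeff_map,
      Polynomial.coeff_zero_eq_eval_zero, hP, map_X]
  · apply Polynomial.map_injective _ (MvPolynomial.map_injective j hj)
    simpa using hc
  · rw [← map_map_aeval, hf, Polynomial.map_C]

theorem isDeformationInvariant_X [Nontrivial K] {i j : σ} (hij : i ≠ j) :
    IsDeformationInvariant K (X i : MvPolynomial σ K) := by
  classical
  refine isDeformationInvariant_iff_exists_aeval.2
    ⟨fun l ↦ Polynomial.C (X l) + if l = j then Polynomial.X else 0, fun l ↦ ?_, ⟨j, ?_⟩, ?_⟩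
  · by_cases h : l = j <;> simp [h]
  · simp
  · simp [hij]

end MvPolynomialDeformation

section Degeneration

open scoped nonZeroDivisors

theorem C_mem_nonZeroDivisors {σ R : Type*} [CommRing R] {c : R} (hc : c ∈ R⁰) :
    (C c : MvPolynomial σ R) ∈ (MvPolynomial σ R)⁰ := by
  rw [mem_nonZeroDivisors_iff_right]
  intro g hg
  ext s
  rw [coeff_zero, ← mul_right_mem_nonZeroDivisors_eq_zero_iff hc, mul_comm, ← coeff_C_mul,
    mul_comm, hg, coeff_zero]

theorem exists_comp_C_mul_X_eq {S : Type*} [CommRing S] {c : S} {q : S[X]}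
    (h : ∀ l, c ^ l ∣ q.coeff l) : ∃ r : S[X], r.comp (Polynomial.C c * Polynomial.X) = q := by
  choose d hd using h
  refine ⟨∑ l ∈ q.support, Polynomial.monomial l (d l), ?_⟩
  ext l
  rw [Polynomial.comp_C_mul_X_coeff, Polynomial.finsetSum_coeff]
  simp only [Polynomial.coeff_monomial, Finset.sum_ite_eq']
  split_ifs with hl
  · rw [hd l, mul_comm]
  · rw [zero_mul, Polynomial.notMem_support_iff.1 hl]

variable {σ R A F κ : Type*} [CommRing R] [CommRing A] [CommRing κ]

theorem aeval_comp_C_mul_X (c : MvPolynomial σ R) (P : σ → (MvPolynomial σ R)[X])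
    (g : MvPolynomial σ R) :
    aeval (fun i ↦ (P i).comp (Polynomial.C c * Polynomial.X)) g =
      (aeval P g).comp (Polynomial.C c * Polynomial.X) :=
  (comp_aeval_apply P ((Polynomial.aeval (Polynomial.C c * Polynomial.X)).restrictScalars R) g).symm

theorem aeval_eq_C_of_comp_C_mul_X {c : MvPolynomial σ R} (hc : c ∈ (MvPolynomial σ R)⁰)
    {P : σ → (MvPolynomial σ R)[X]} {g : MvPolynomial σ R}
    (h : aeval (fun i ↦ (P i).comp (Polynomial.C c * Polynomial.X)) g = Polynomial.C g) :
    aeval P g = Polynomial.C g := by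
  rw [← sub_eq_zero, ← Polynomial.comp_C_mul_X_eq_zero_iff hc, Polynomial.sub_comp,
    ← aeval_comp_C_mul_X, h, Polynomial.C_comp, sub_self]

theorem adjoinRoot_root_X_pow_sub_C_pow (n : ℕ) (a : A) :
    AdjoinRoot.root (Polynomial.X ^ n - Polynomial.C a) ^ n = AdjoinRoot.of _ a := by
  have h := AdjoinRoot.eval₂_root (Polynomial.X ^ n - Polynomial.C a)
  rwa [Polynomial.eval₂_sub, Polynomial.eval₂_X_pow, Polynomial.eval₂_C, sub_eq_zero] at h

theorem root_X_pow_sub_C_mem_nonZeroDivisors [IsDomain A] {n : ℕ} (hn : n ≠ 0) {a : A}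
    (ha : a ≠ 0) :
    AdjoinRoot.root (Polynomial.X ^ n - Polynomial.C a) ∈
      (AdjoinRoot (Polynomial.X ^ n - Polynomial.C a))⁰ := by
  have := (Polynomial.monic_X_pow_sub_C a hn).free_adjoinRoot
  rw [← isRegular_iff_mem_nonZeroDivisors, ← IsRegular.pow_iff hn.pos,
    adjoinRoot_root_X_pow_sub_C_pow, isRegular_iff_mem_nonZeroDivisors,
    mem_nonZeroDivisors_iff_right]
  intro x hx
  rw [mul_comm, ← AdjoinRoot.algebraMap_eq, ← Algebra.smul_def] at hx
  exact (smul_eq_zero.1 hx).resolve_left ha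

theorem isDeformationInvariant_map_of_comp_C_mul_X {c : MvPolynomial σ R}
    (hc : c ∈ (MvPolynomial σ R)⁰) {v : MvPolynomial σ R} {P : σ → (MvPolynomial σ R)[X]}
    (hP : ∀ i, (P i).coeff 0 = X i)
    (hv : aeval (fun i ↦ (P i).comp (Polynomial.C c * Polynomial.X)) v = Polynomial.C v)
    (ρ : R →+* κ) {i : σ} {n : ℕ} (hn : n ≠ 0) (hne : MvPolynomial.map ρ ((P i).coeff n) ≠ 0) :
    IsDeformationInvariant κ (MvPolynomial.map ρ v) := by
  refine isDeformationInvariant_iff_exists_aeval.2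
    ⟨fun i ↦ (P i).map (MvPolynomial.map ρ), fun i ↦ ?_, ⟨i, fun h ↦ hne ?_⟩, ?_⟩
  · rw [← Polynomial.coeff_zero_eq_eval_zero, Polynomial.coeff_map, hP, map_X]
  · simpa [Polynomial.coeff_C_of_ne_zero hn] using congrArg (fun q ↦ q.coeff n) h
  · rw [← map_map_aeval, aeval_eq_C_of_comp_C_mul_X hc hv, Polynomial.map_C]

-- Adjoin `ζ` with `ζ ^ n = p` and replace the parameter `s` by `s / ζ ^ E`. When `E / n` is the
-- least slope, the coefficients stay integral, and setting `ζ = 0` leaves a nonconstant family.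
theorem isDeformationInvariant_map_of_slope [IsDomain A] {p : A} (hp : p ≠ 0) {π : A →+* κ}
    (hπ : π p = 0) {v : MvPolynomial σ A} {G : σ → (MvPolynomial σ A)[X]}
    (hG : ∀ i, (G i).eval 0 = X i) (hv : aeval G v = Polynomial.C v) {n E : ℕ} (hn : n ≠ 0)
    (hslope : ∀ i l, ∃ e, E * l ≤ n * e ∧ C p ^ e ∣ (G i).coeff l) {i₀ : σ} {d : MvPolynomial σ A}
    (hd : (G i₀).coeff n = C p ^ E * d) (hd₀ : MvPolynomial.map π d ≠ 0) :
    IsDeformationInvariant κ (MvPolynomial.map π v) := by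
  let ι : A →+* AdjoinRoot (Polynomial.X ^ n - Polynomial.C p) := AdjoinRoot.of _
  let ζ := AdjoinRoot.root (Polynomial.X ^ n - Polynomial.C p)
  have hι (e : ℕ) : MvPolynomial.map ι (C (σ := σ) p ^ e) = C ζ ^ (n * e) := by
    rw [map_pow, map_C, ← adjoinRoot_root_X_pow_sub_C_pow, map_pow, pow_mul]
  let ρ : AdjoinRoot (Polynomial.X ^ n - Polynomial.C p) →+* κ :=
    AdjoinRoot.lift π 0 (by simp [hπ, hn])
  have hρ (g : MvPolynomial σ A) : (g.map ι).map ρ = g.map π := by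
    rw [MvPolynomial.map_map, AdjoinRoot.lift_comp_of]
  have hreg : (C (ζ ^ E) : MvPolynomial σ _) ∈ (MvPolynomial σ _)⁰ :=
    C_mem_nonZeroDivisors (pow_mem (root_X_pow_sub_C_mem_nonZeroDivisors hn hp) E)
  have hdvd (i : σ) (l : ℕ) : C (ζ ^ E) ^ l ∣ ((G i).map (MvPolynomial.map ι)).coeff l := by
    obtain ⟨e, he, hdvd⟩ := hslope i l
    rw [Polynomial.coeff_map, map_pow, ← pow_mul]
    exact (pow_dvd_pow _ he).trans (hι e ▸ map_dvd _ hdvd)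
  choose H hH using fun i ↦ exists_comp_C_mul_X_eq (hdvd i)
  have hH₀ (i : σ) : (H i).coeff 0 = X i := by
    have := congrArg (fun q ↦ q.coeff 0) (hH i)
    simpa [Polynomial.coeff_zero_eq_eval_zero, hG] using this
  have hHn : (H i₀).coeff n = d.map ι := by
    apply (mul_cancel_right_mem_nonZeroDivisors (pow_mem hreg n)).1
    rw [← Polynomial.comp_C_mul_X_coeff, hH, Polynomial.coeff_map, hd, map_mul, hι, map_pow,
      ← pow_mul, mul_comm, mul_comm n]
  rw [← hρ]
  refine isDeformationInvariant_map_of_comp_C_mul_X hreg hH₀ ?_ ρ (i := i₀) hn (by rwa [hHn, hρ])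
  rw [funext hH, ← map_map_aeval, hv, Polynomial.map_C]

theorem exists_eq_C_pow_mul_and_map_ne_zero [IsDomain A] [WfDvdMonoid A] [Nontrivial κ] {p : A}
    {π : A →+* κ} (hπ : RingHom.ker π = Ideal.span {p}) {q : MvPolynomial σ A} (hq : q ≠ 0) :
    ∃ e d, q = C p ^ e * d ∧ MvPolynomial.map π d ≠ 0 := by
  have hp : ¬ IsUnit p := by
    rw [← Ideal.span_singleton_eq_top, ← hπ]
    exact RingHom.ker_ne_top π
  obtain ⟨s, hs⟩ := MvPolynomial.exists_coeff_ne_zero hq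
  obtain ⟨m, hm⟩ := FiniteMultiplicity.of_not_isUnit hp hs
  have hfin : FiniteMultiplicity (C p) q := ⟨m, fun h ↦ hm ?_⟩
  · obtain ⟨d, hd, hnd⟩ := hfin.exists_eq_pow_mul_and_not_dvd
    refine ⟨_, d, hd, fun h ↦ hnd ?_⟩
    rwa [← Ideal.mem_span_singleton, ← Set.image_singleton, ← Ideal.map_span, ← hπ,
      ← MvPolynomial.ker_map]
  · rw [← map_pow] at h
    exact (C_dvd_iff_dvd_coeff _ _).1 h s

theorem isDeformationInvariant_map_of_aeval_eq_C [Finite σ] [IsDomain A] [WfDvdMonoid A]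
    [Nontrivial κ] {p : A} (hp : p ≠ 0) {π : A →+* κ} (hπ : RingHom.ker π = Ideal.span {p})
    {v : MvPolynomial σ A} {G : σ → (MvPolynomial σ A)[X]} (hG : ∀ i, (G i).eval 0 = X i) {j : σ}
    (hj : G j ≠ Polynomial.C (X j)) (hv : aeval G v = Polynomial.C v) :
    IsDeformationInvariant κ (MvPolynomial.map π v) := by
  choose! e d hed hd using fun i l (h : (G i).coeff l ≠ 0) ↦
    exists_eq_C_pow_mul_and_map_ne_zero hπ h
  let T : Set (σ × ℕ) := {x | x.2 ≠ 0 ∧ (G x.1).coeff x.2 ≠ 0}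
  have hT : T.Finite :=
    (Set.finite_iUnion fun i ↦ (G i).support.finite_toSet.image (Prod.mk i)).subset fun x hx ↦
      Set.mem_iUnion.2 ⟨x.1, x.2, Polynomial.mem_support_iff.2 hx.2, rfl⟩
  have hT₀ : T.Nonempty := by
    contrapose! hj
    ext1 l
    rcases eq_or_ne l 0 with rfl | hl
    · rw [Polynomial.coeff_zero_eq_eval_zero, hG, Polynomial.coeff_C_zero]
    · rw [Polynomial.coeff_C_of_ne_zero hl]
      by_contra hne
      exact hj.subset (⟨hl, hne⟩ : (j, l) ∈ T)
  obtain ⟨⟨i₀, n⟩, ⟨hn, hne⟩, hmin⟩ := Set.exists_min_image T (fun x ↦ (e x.1 x.2 : ℚ) / x.2) hT hT₀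
  refine isDeformationInvariant_map_of_slope hp
    (by rw [← RingHom.mem_ker, hπ]; exact Ideal.mem_span_singleton_self p) hG hv hn
    (fun i l ↦ ?_) (hed i₀ n hne) (hd i₀ n hne)
  rcases eq_or_ne l 0 with rfl | hl
  · exact ⟨0, by simp⟩
  by_cases hc : (G i).coeff l = 0
  · exact ⟨e i₀ n * l, Nat.le_mul_of_pos_left _ hn.pos, hc ▸ dvd_zero _⟩
  · have hle := hmin (i, l) ⟨hl, hc⟩
    rw [div_le_div_iff₀ (by exact_mod_cast hn.pos) (by exact_mod_cast hl.pos), mul_comm _ (n : ℚ)]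
      at hle
    exact ⟨e i l, by exact_mod_cast hle, hed i l hc ▸ dvd_mul_right _ _⟩

attribute [local instance] Polynomial.algebra MvPolynomial.algebraMvPolynomial in
theorem exists_map_eq_C_C_mul {ι : Type*} [Finite ι] [IsDomain A] [Field F] [Algebra A F]
    [IsFractionRing A F] (P : ι → (MvPolynomial σ F)[X]) :
    ∃ N : A, N ≠ 0 ∧ ∀ i, ∃ Q : (MvPolynomial σ A)[X],
      Q.map (MvPolynomial.map (algebraMap A F)) = Polynomial.C (C (algebraMap A F N)) * P i := by
  have := MvPolynomial.isLocalization (σ := σ) A⁰ F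
  have := Polynomial.isLocalization (A⁰.map (C (σ := σ))) (MvPolynomial σ F)
  obtain ⟨⟨_, _, ⟨N, hN, rfl⟩, rfl⟩, hint⟩ :=
    IsLocalization.exist_integer_multiples_of_finite ((A⁰.map (C (σ := σ))).map Polynomial.C) P
  refine ⟨N, nonZeroDivisors.ne_zero hN, fun i ↦ ?_⟩
  obtain ⟨Q, hQ⟩ := hint i
  refine ⟨Q, hQ.trans ?_⟩
  rw [Algebra.smul_def]
  change (Polynomial.C (C N)).map (MvPolynomial.map (algebraMap A F)) * P i = _
  rw [Polynomial.map_C, map_C]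

theorem exists_map_eq_comp_C_mul_X [Finite σ] [IsDomain A] [Field F] [Algebra A F]
    [IsFractionRing A F] {P : σ → (MvPolynomial σ F)[X]} (hP : ∀ i, (P i).eval 0 = X i) :
    ∃ N : A, N ≠ 0 ∧ ∃ G : σ → (MvPolynomial σ A)[X], (∀ i, (G i).eval 0 = X i) ∧
      ∀ i, (G i).map (MvPolynomial.map (algebraMap A F)) =
        (P i).comp (Polynomial.C (C (algebraMap A F N)) * Polynomial.X) := by
  obtain ⟨N, hN, hQ⟩ := exists_map_eq_C_C_mul (A := A) fun i ↦ (P i).divX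
  choose Q hQ using hQ
  refine ⟨N, hN, fun i ↦ Polynomial.C (X i) +
    Polynomial.X * (Q i).comp (Polynomial.C (C N) * Polynomial.X), fun i ↦ by simp, fun i ↦ ?_⟩
  have hPi := (P i).divX_mul_X_add
  rw [Polynomial.coeff_zero_eq_eval_zero, hP] at hPi
  rw [← hPi]
  simp only [Polynomial.map_add, Polynomial.map_mul, Polynomial.map_C, Polynomial.map_X, map_X,
    Polynomial.map_comp, hQ, map_C, Polynomial.add_comp, Polynomial.mul_comp, Polynomial.C_comp,
    Polynomial.X_comp]
  ring

theorem IsDeformationInvariant.map_of_isFractionRing [Finite σ] [IsDomain A] [WfDvdMonoid A]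
    [Field F] [Algebra A F] [IsFractionRing A F] [Nontrivial κ] {p : A} (hp : p ≠ 0) {π : A →+* κ}
    (hπ : RingHom.ker π = Ideal.span {p}) {v : MvPolynomial σ A}
    (hv : IsDeformationInvariant F (MvPolynomial.map (algebraMap A F) v)) :
    IsDeformationInvariant κ (MvPolynomial.map π v) := by
  obtain ⟨P, hP, ⟨i, hi⟩, hPv⟩ := isDeformationInvariant_iff_exists_aeval.1 hv
  obtain ⟨N, hN, G, hG, hGP⟩ := exists_map_eq_comp_C_mul_X (A := A) hP
  have hinj : Function.Injective (MvPolynomial.map (σ := σ) (algebraMap A F)) :=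
    MvPolynomial.map_injective _ (IsFractionRing.injective A F)
  refine isDeformationInvariant_map_of_aeval_eq_C hp hπ hG (j := i) (fun hc ↦ hi ?_) ?_
  · have hN' : C (algebraMap A F N) ∈ (MvPolynomial σ F)⁰ := by simpa using hN
    rw [← sub_eq_zero, ← Polynomial.comp_C_mul_X_eq_zero_iff hN', Polynomial.sub_comp, ← hGP, hc]
    simp
  · apply Polynomial.map_injective _ hinj
    rw [map_map_aeval, funext hGP, aeval_comp_C_mul_X, hPv, Polynomial.C_comp, Polynomial.map_C]

end Degeneration

section LeadingForm

variable {σ K : Type*}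

theorem aeval_C_pow_mul_X_monomial [CommRing K] (w : σ → ℕ) (u : K) (s : σ →₀ ℕ) (c : K) :
    aeval (fun i ↦ C (u ^ w i) * X i : σ → MvPolynomial σ K) (monomial s c) =
      monomial s (u ^ Finsupp.weight w s * c) := by
  rw [aeval_monomial, algebraMap_eq, Finsupp.weight_apply, ← C_mul_monomial, monomial_eq]
  simp only [Finsupp.prod, Finsupp.sum, mul_pow, Finset.prod_mul_distrib, map_prod, map_pow,
    ← Finset.prod_pow_eq_pow_sum, ← pow_mul, smul_eq_mul, mul_comm (w _)]
  ring

/-- The automorphism `x i ↦ u ^ w i * x i` of the polynomial ring, for a unit `u`. -/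
def weightedScaling [CommRing K] (w : σ → ℕ) (u : Kˣ) : MvPolynomial σ K ≃ₐ[K] MvPolynomial σ K :=
  AlgEquiv.ofAlgHom (aeval fun i ↦ C ((u : K) ^ w i) * X i)
    (aeval fun i ↦ C (((u⁻¹ : Kˣ) : K) ^ w i) * X i)
    (algHom_ext fun i ↦ by
      rw [AlgHom.comp_apply, aeval_X, map_mul, algHom_C, aeval_X, algebraMap_eq, ← mul_assoc,
        ← map_mul, ← mul_pow, Units.inv_mul, one_pow, C_1, one_mul, AlgHom.id_apply])
    (algHom_ext fun i ↦ by
      rw [AlgHom.comp_apply, aeval_X, map_mul, algHom_C, aeval_X, algebraMap_eq, ← mul_assoc,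
        ← map_mul, ← mul_pow, Units.mul_inv, one_pow, C_1, one_mul, AlgHom.id_apply])

theorem coeff_weightedScaling [CommRing K] (w : σ → ℕ) (u : Kˣ) (f : MvPolynomial σ K)
    (s : σ →₀ ℕ) :
    coeff s (weightedScaling w u f) = (u : K) ^ Finsupp.weight w s * coeff s f := by
  classical
  induction f using MvPolynomial.induction_on' with
  | monomial r c =>
    change coeff s (aeval _ (monomial r c)) = _
    rw [aeval_C_pow_mul_X_monomial, coeff_monomial, coeff_monomial]
    split_ifs with h
    · rw [h]
    · rw [mul_zero]
  | add p q hp hq => rw [map_add, coeff_add, coeff_add, hp, hq, mul_add]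

/-- The polynomial `t ^ d * f (t ^ (-w i) * x i)` over `K[t]`, where all weights of `f` are at most
`d`; it deforms `f` (at `t = 1`) to its component of weight `d` (at `t = 0`). -/
def weightedDegeneration [CommSemiring K] (w : σ → ℕ) (d : ℕ) (f : MvPolynomial σ K) :
    MvPolynomial σ K[X] :=
  ∑ s ∈ f.support, monomial s (Polynomial.monomial (d - Finsupp.weight w s) (coeff s f))

theorem coeff_weightedDegeneration [CommSemiring K] (w : σ → ℕ) (d : ℕ) (f : MvPolynomial σ K)
    (s : σ →₀ ℕ) : coeff s (weightedDegeneration w d f) =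
      Polynomial.monomial (d - Finsupp.weight w s) (coeff s f) := by
  classical
  simp only [weightedDegeneration, coeff_sum, coeff_monomial, Finset.sum_ite_eq', mem_support_iff]
  split_ifs with h
  · rfl
  · rw [not_not.1 h, Polynomial.monomial_zero_right]

theorem map_eval_zero_weightedDegeneration [CommRing K] {w : σ → ℕ} {d : ℕ}
    {f : MvPolynomial σ K} (hd : ∀ s ∈ f.support, Finsupp.weight w s ≤ d) :
    (weightedDegeneration w d f).map (Polynomial.evalRingHom 0) =
      weightedHomogeneousComponent w d f := by
  classical
  ext s
  rw [coeff_map, coeff_weightedDegeneration, coeff_weightedHomogeneousComponent,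
    Polynomial.coe_evalRingHom, ← Polynomial.coeff_zero_eq_eval_zero, Polynomial.coeff_monomial]
  by_cases hs : s ∈ f.support
  · exact if_congr (by have := hd s hs; omega) rfl rfl
  · rw [notMem_support_iff.1 hs, ite_self, ite_self]

theorem map_algebraMap_weightedDegeneration [Field K] {w : σ → ℕ} {d : ℕ} {f : MvPolynomial σ K}
    (hd : ∀ s ∈ f.support, Finsupp.weight w s ≤ d) :
    (weightedDegeneration w d f).map (algebraMap K[X] (RatFunc K)) =
      C (RatFunc.X ^ d) * weightedScaling w (Units.mk0 _ RatFunc.X_ne_zero)⁻¹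
        (f.map (algebraMap K (RatFunc K))) := by
  ext s
  rw [coeff_map, coeff_weightedDegeneration, coeff_C_mul, coeff_weightedScaling, coeff_map]
  by_cases hs : s ∈ f.support
  · rw [← mul_assoc, Units.val_inv_eq_inv_val, Units.val_mk0, inv_pow,
      ← pow_sub₀ _ RatFunc.X_ne_zero (hd s hs), ← Polynomial.C_mul_X_pow_eq_monomial, map_mul,
      map_pow, RatFunc.algebraMap_X, mul_comm]
    rfl
  · simp [notMem_support_iff.1 hs]

theorem IsDeformationInvariant.weightedHomogeneousComponent [Finite σ] [Field K]
    {f : MvPolynomial σ K} (hf : IsDeformationInvariant K f) {w : σ → ℕ} {d : ℕ}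
    (hd : ∀ s ∈ f.support, Finsupp.weight w s ≤ d) :
    IsDeformationInvariant K (weightedHomogeneousComponent w d f) := by
  rw [← map_eval_zero_weightedDegeneration hd]
  refine map_of_isFractionRing (F := RatFunc K) (p := Polynomial.X) Polynomial.X_ne_zero
    (by ext q; simp [Ideal.mem_span_singleton, Polynomial.X_dvd_iff,
      Polynomial.coeff_zero_eq_eval_zero]) ?_
  rw [map_algebraMap_weightedDegeneration hd]
  refine ((hf.map_of_injective (algebraMap K (RatFunc K)).injective).map_algEquiv _).of_mem_adjoin
    (mul_mem (Subalgebra.algebraMap_mem _ _) (Algebra.self_mem_adjoin_singleton _ _))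

end LeadingForm

section SumOfPowers

theorem isCoprime_of_mul_pow_add_mul_pow_eq {R : Type*} [CommRing R] {x y u v c : R} {a b : ℕ}
    (ha : a ≠ 0) (hb : b ≠ 0) (hc : IsUnit c) (h : u * x ^ a + v * y ^ b = c) : IsCoprime x y := by
  obtain ⟨d, hd⟩ := hc.exists_left_inv
  have hcop : IsCoprime (u * x ^ a) (v * y ^ b) := ⟨d, d, by rw [← mul_add, h, hd]⟩
  exact (IsCoprime.pow_iff ha.bot_lt hb.bot_lt).1 hcop.of_mul_left_right.of_mul_right_right

-- Mason–Stothers, applied to the summands and `c = c * 1 ^ r`: the exponent `r` is free, so it can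
-- be taken large enough for `1 / a + 1 / b + 1 / r ≤ 1` and prime to the characteristic.
theorem natDegree_eq_zero_of_C_mul_pow_add_C_mul_pow_eq_C {R : Type*} [CommRing R] [IsDomain R]
    {P Q : R[X]} {a b : ℕ} {u v c : R} (hP : P ≠ 0) (hQ : Q ≠ 0) (ha : (a : R) ≠ 0)
    (hb : (b : R) ≠ 0) (ha1 : 1 < a) (hb1 : 1 < b) (hab : a ≠ b) (hu : u ≠ 0) (hv : v ≠ 0)
    (hc : c ≠ 0) (h : .C u * P ^ a + .C v * Q ^ b = .C c) : P.natDegree = 0 := by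
  let L := FractionRing R
  let j := Polynomial.mapRingHom (algebraMap R L)
  have hinj : Function.Injective (algebraMap R L) := IsFractionRing.injective R L
  have hj : Function.Injective j := Polynomial.map_injective _ hinj
  have hL {x : R} (hx : x ≠ 0) : algebraMap R L x ≠ 0 := (map_ne_zero_iff _ hinj).2 hx
  have hjC (x : R) : j (.C x) = .C (algebraMap R L x) := Polynomial.map_C _
  replace h : .C (algebraMap R L u) * j P ^ a + .C (algebraMap R L v) * j Q ^ b =
      Polynomial.C (algebraMap R L c) := by
    simpa only [map_add, map_mul, map_pow, hjC] using congrArg j h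
  have hcop : IsCoprime (j P) (j Q) := isCoprime_of_mul_pow_add_mul_pow_eq (by omega) (by omega)
    (Polynomial.isUnit_C.2 (hL hc).isUnit) h
  obtain ⟨r, hr, hr6⟩ : ∃ r : ℕ, (r : L) ≠ 0 ∧ 6 ≤ r := by
    by_cases h6 : ((6 : ℕ) : L) = 0
    · refine ⟨7, fun h7 ↦ one_ne_zero (α := L) ?_, by norm_num⟩
      push_cast at h6 h7
      linear_combination h7 - h6
    · exact ⟨6, h6, le_rfl⟩
  have hineq : b * r + r * a + a * b ≤ a * b * r := by
    have h5 : 6 * (a + b) ≤ 5 * (a * b) := by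
      rcases hab.lt_or_gt with hlt | hlt <;> nlinarith
    nlinarith
  have hdeg := Polynomial.flt_catalan (a := j P) (b := j Q) (c := 1) (by omega) (by omega)
    (by omega) hineq (by simpa using hL ha) (by simpa using hL hb) hr
    ((map_ne_zero_iff _ hj).2 hP) ((map_ne_zero_iff _ hj).2 hQ) one_ne_zero hcop (hL hu) (hL hv)
    (neg_ne_zero.2 (hL hc)) (by rw [h, one_pow, mul_one, Polynomial.C_neg, add_neg_cancel])
  rw [← Polynomial.natDegree_map_eq_of_injective hinj]
  exact hdeg.1

-- Differentiating the coefficients kills the term in `P`, so `Q ^ (b - 1)` divides the constant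
-- `D c`.
theorem natDegree_pow_eq_zero_of_derivation {R : Type*} [CommRing R] [IsDomain R]
    (D : Derivation ℤ R R) {P Q : R[X]} {a b : ℕ} {u v c : R} (ha : (a : R) = 0) (hu : D u = 0)
    (hv : D v = 0) (hc : D c ≠ 0) (h : .C u * P ^ a + .C v * Q ^ b = .C c) :
    (Q ^ (b - 1)).natDegree = 0 := by
  let _ : Differential R := ⟨D⟩
  have hDC (x : R) : Differential.mapCoeffs (Polynomial.C x) = .C (D x) :=
    Differential.mapCoeffs_C x
  have hD : .C v * (b * (Q ^ (b - 1) * Differential.mapCoeffs Q)) = Polynomial.C (D c) := by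
    have ha' : (a : R[X]) = 0 := by rw [← Polynomial.C_eq_natCast, ha, Polynomial.C_0]
    simpa [Derivation.leibniz_pow, hDC, hu, hv, ha'] using congrArg Differential.mapCoeffs h
  have hdvd : Q ^ (b - 1) ∣ Polynomial.C (D c) :=
    hD ▸ ((dvd_mul_right _ _).mul_left _).mul_left _
  simpa using Polynomial.natDegree_le_of_dvd hdvd (Polynomial.C_ne_zero.2 hc)

theorem pderiv_C_mul_X_pow_add_C_mul_X_pow {K σ : Type*} [CommRing K] {i j : σ} (hij : i ≠ j)
    (u v : K) (a b : ℕ) : pderiv j (C u * X i ^ a + C v * X j ^ b : MvPolynomial σ K) =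
      C (v * b) * X j ^ (b - 1) := by
  simp [Derivation.leibniz_pow, pderiv_X_of_ne hij, mul_assoc]

theorem le_one_of_C_mul_pow_add_C_mul_pow_eq_C_of_cast_eq_zero {K σ : Type*} [Field K] {i j : σ}
    (hij : i ≠ j) {P Q : (MvPolynomial σ K)[X]} {a b : ℕ} {u v : K} (hQ : Q.natDegree ≠ 0)
    (ha : (a : K) = 0) (hb : (b : K) ≠ 0) (hv : v ≠ 0)
    (h : .C (C u) * P ^ a + .C (C v) * Q ^ b = Polynomial.C (C u * X i ^ a + C v * X j ^ b)) :
    b ≤ 1 := by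
  have hdeg := natDegree_pow_eq_zero_of_derivation ((pderiv j).restrictScalars ℤ)
    (by rw [← map_natCast C, ha, C_0]) (pderiv_C (i := j)) (pderiv_C (i := j)) ?_ h
  · rw [Polynomial.natDegree_pow] at hdeg
    exact Nat.sub_eq_zero_iff_le.1 ((Nat.mul_eq_zero.1 hdeg).resolve_right hQ)
  · change pderiv j _ ≠ 0
    rw [pderiv_C_mul_X_pow_add_C_mul_X_pow hij]
    exact mul_ne_zero (C_ne_zero.2 (mul_ne_zero hv hb)) (pow_ne_zero _ (X_ne_zero j))

theorem eq_one_or_eq_one_of_C_mul_pow_add_C_mul_pow_eq_C {K σ : Type*} [Field K] {i j : σ}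
    (hij : i ≠ j) {P Q : (MvPolynomial σ K)[X]} {a b : ℕ} {u v : K} (hP : P.natDegree ≠ 0)
    (hQ : Q.natDegree ≠ 0) (hab : a.Coprime b) (hu : u ≠ 0) (hv : v ≠ 0)
    (h : .C (C u) * P ^ a + .C (C v) * Q ^ b = Polynomial.C (C u * X i ^ a + C v * X j ^ b)) :
    a = 1 ∨ b = 1 := by
  obtain rfl | ha0 := eq_or_ne a 0
  · exact .inr (Nat.coprime_zero_left b |>.1 hab)
  obtain rfl | hb0 := eq_or_ne b 0
  · exact .inl (Nat.coprime_zero_right a |>.1 hab)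
  by_contra! hne
  have ha : (a : K) ≠ 0 := fun ha ↦ by
    have hb : IsUnit (b : K) := by simpa [ha] using hab.cast (R := K)
    have := le_one_of_C_mul_pow_add_C_mul_pow_eq_C_of_cast_eq_zero hij hQ ha hb.ne_zero hv h
    omega
  have hb : (b : K) ≠ 0 := fun hb ↦ by
    rw [add_comm, add_comm (C u * _)] at h
    have := le_one_of_C_mul_pow_add_C_mul_pow_eq_C_of_cast_eq_zero hij.symm hP hb ha hu h
    omega
  have hc : (C u * X i ^ a + C v * X j ^ b : MvPolynomial σ K) ≠ 0 := fun hc ↦ by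
    have hd := pderiv_C_mul_X_pow_add_C_mul_X_pow hij u v a b
    rw [hc, map_zero] at hd
    exact mul_ne_zero (C_ne_zero.2 (mul_ne_zero hv hb)) (pow_ne_zero _ (X_ne_zero j)) hd.symm
  have hcast {n : ℕ} (hn : (n : K) ≠ 0) : (n : MvPolynomial σ K) ≠ 0 := by
    rwa [← map_natCast C, C_ne_zero]
  exact hP <| natDegree_eq_zero_of_C_mul_pow_add_C_mul_pow_eq_C
    (Polynomial.ne_zero_of_natDegree_gt hP.bot_lt) (Polynomial.ne_zero_of_natDegree_gt hQ.bot_lt)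
    (hcast ha) (hcast hb) (by omega) (by omega)
    (fun h ↦ by subst h; exact hne.1 ((Nat.coprime_self a).1 hab)) (C_ne_zero.2 hu)
    (C_ne_zero.2 hv) hc h

end SumOfPowers

section WeightedHomogeneous

variable {σ τ R : Type*} [CommSemiring R]

theorem isWeightedHomogeneous_aeval {w : σ → ℕ} {w' : τ → ℕ} {g : σ → MvPolynomial τ R}
    (hg : ∀ i, IsWeightedHomogeneous w' (g i) (w i)) {f : MvPolynomial σ R} {n : ℕ}
    (hf : IsWeightedHomogeneous w f n) : IsWeightedHomogeneous w' (aeval g f) n := by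
  rw [aeval_def, eval₂_eq]
  refine IsWeightedHomogeneous.sum _ _ _ fun s hs ↦ ?_
  rw [← hf (mem_support_iff.1 hs), Finsupp.weight_apply]
  exact (IsWeightedHomogeneous.prod _ _ _ fun i _ ↦ (hg i).pow (s i)).C_mul _

theorem weightedHomogeneousComponent_aeval {w : σ → ℕ} {w' : τ → ℕ} {g : σ → MvPolynomial τ R}
    (hg : ∀ i, IsWeightedHomogeneous w' (g i) (w i)) (f : MvPolynomial σ R) (n : ℕ) :
    weightedHomogeneousComponent w' n (aeval g f) =
      aeval g (weightedHomogeneousComponent w n f) := by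
  induction f using MvPolynomial.induction_on' with
  | add p q hp hq => simp only [map_add, hp, hq]
  | monomial s c =>
    have hs := isWeightedHomogeneous_monomial w s c rfl
    have hgs := isWeightedHomogeneous_aeval hg hs
    obtain rfl | hn := eq_or_ne n (Finsupp.weight w s)
    · rw [hs.weightedHomogeneousComponent_same, hgs.weightedHomogeneousComponent_same]
    · rw [hs.weightedHomogeneousComponent_ne n hn, hgs.weightedHomogeneousComponent_ne n hn,
        map_zero]

theorem aeval_mul_of_isHomogeneous {A : Type*} [CommSemiring A] [Algebra R A] (x : σ → A) (y : A)
    {f : MvPolynomial σ R} {n : ℕ} (hf : f.IsHomogeneous n) :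
    aeval (fun i ↦ x i * y) f = y ^ n * aeval x f := by
  rw [aeval_def, eval₂_eq, aeval_def, eval₂_eq, Finset.mul_sum]
  refine Finset.sum_congr rfl fun s hs ↦ ?_
  have hdeg : ∑ i ∈ s.support, s i = n := by
    rw [← Finsupp.degree_apply, Finsupp.degree_eq_weight_one]
    exact hf (mem_support_iff.1 hs)
  simp only [mul_pow, Finset.prod_mul_distrib, Finset.prod_pow_eq_pow_sum, hdeg]
  ring

theorem exists_isHomogeneous_aeval_X_pow_eq [Finite σ] {w n : σ → ℕ} {e g : ℕ} (he : e ≠ 0)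
    (hn : ∀ i, n i * w i = e) {f : MvPolynomial σ R} (hf : IsWeightedHomogeneous w f (e * g))
    (hdvd : ∀ s ∈ f.support, ∀ i, n i ∣ s i) :
    ∃ F : MvPolynomial σ R, F.IsHomogeneous g ∧ aeval (fun i ↦ X i ^ n i) F = f := by
  cases nonempty_fintype σ
  let q (s : σ →₀ ℕ) : σ →₀ ℕ := Finsupp.equivFunOnFinite.symm fun i ↦ s i / n i
  refine ⟨∑ s ∈ f.support, monomial (q s) (coeff s f),
    IsHomogeneous.sum _ _ _ fun s hs ↦ isHomogeneous_monomial _ ?_, ?_⟩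
  · refine Nat.eq_of_mul_eq_mul_left he.bot_lt ?_
    rw [← hf (mem_support_iff.1 hs), Finsupp.weight_apply, Finsupp.sum_fintype _ _ (by simp),
      Finsupp.degree_eq_sum, Finset.mul_sum]
    refine Finset.sum_congr rfl fun i _ ↦ ?_
    rw [← hn i, mul_right_comm, smul_eq_mul, mul_comm (n i)]
    exact congrArg (· * w i) (Nat.div_mul_cancel (hdvd s hs i))
  · conv_rhs => rw [f.as_sum]
    rw [map_sum]
    refine Finset.sum_congr rfl fun s hs ↦ ?_
    rw [aeval_monomial, monomial_eq, Finsupp.prod_fintype _ _ (by simp),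
      Finsupp.prod_fintype _ _ (by simp), algebraMap_eq]
    refine congrArg (C _ * ·) (Finset.prod_congr rfl fun i _ ↦ ?_)
    rw [← pow_mul]
    exact congrArg (X i ^ ·) (Nat.mul_div_cancel' (hdvd s hs i))

end WeightedHomogeneous

section LeadingCoeff

variable {σ K R : Type*} [CommRing K] [CommRing R] [IsDomain R] [Algebra K R]

theorem natDegree_prod_pow {P : σ → R[X]} (hP : ∀ i, P i ≠ 0) (s : σ →₀ ℕ) :
    (s.prod fun i n ↦ P i ^ n).natDegree = Finsupp.weight (fun i ↦ (P i).natDegree) s := by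
  rw [Finsupp.prod, Polynomial.natDegree_prod _ _ fun i _ ↦ pow_ne_zero _ (hP i),
    Finsupp.weight_apply]
  simp [Finsupp.sum]

theorem coeff_aeval_of_weight_le {P : σ → R[X]} (hP : ∀ i, P i ≠ 0) {f : MvPolynomial σ K} {M : ℕ}
    (hM : ∀ s ∈ f.support, Finsupp.weight (fun i ↦ (P i).natDegree) s ≤ M) :
    (aeval P f).coeff M = aeval (fun i ↦ (P i).leadingCoeff)
      (weightedHomogeneousComponent (fun i ↦ (P i).natDegree) M f) := by
  classical
  rw [weightedHomogeneousComponent_apply, map_sum, Finset.sum_filter, f.as_sum, map_sum,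
    Polynomial.finsetSum_coeff, ← f.as_sum]
  refine Finset.sum_congr rfl fun s hs ↦ ?_
  rw [aeval_monomial, aeval_monomial, Polynomial.algebraMap_apply, Polynomial.coeff_C_mul]
  split_ifs with h
  · rw [← h, ← natDegree_prod_pow hP, Polynomial.coeff_natDegree, Finsupp.prod,
      Polynomial.leadingCoeff_prod]
    simp [Finsupp.prod]
  · rw [Polynomial.coeff_eq_zero_of_natDegree_lt, mul_zero]
    rw [natDegree_prod_pow hP]
    exact lt_of_le_of_ne (hM s hs) h

end LeadingCoeff

section LeadingCoeffDeformation

variable {σ K : Type*} [Field K] {φ : MvPolynomial σ K →ₐ[K] (MvPolynomial σ K)[X]}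
  {h : MvPolynomial σ K}

theorem IsDeformation.aeval_leadingCoeff_eq_zero (hφ : IsDeformation φ) (hφh : φ h = .C h) {M : ℕ}
    (hM0 : M ≠ 0) (hM : ∀ s ∈ h.support, Finsupp.weight (fun i ↦ (φ (X i)).natDegree) s ≤ M) :
    aeval (fun i ↦ (φ (X i)).leadingCoeff)
      (weightedHomogeneousComponent (fun i ↦ (φ (X i)).natDegree) M h) = 0 := by
  have haeval : aeval (fun i ↦ φ (X i)) h = Polynomial.C h :=
    (DFunLike.congr_fun (aeval_unique φ) h).symm.trans hφh
  rw [← coeff_aeval_of_weight_le (fun i ↦ hφ.ne_zero (X_ne_zero i)) hM, haeval,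
    Polynomial.coeff_C_of_ne_zero hM0]

theorem IsDeformation.aeval_leadingCoeff_pow_eq_zero (hφ : IsDeformation φ) {n : σ → ℕ} {δ : ℕ}
    (hδ : ∀ i, n i * (φ (X i)).natDegree = δ) (hδ0 : δ ≠ 0) {F : MvPolynomial σ K} {g : ℕ}
    (hF : F.IsHomogeneous g) (hg : g ≠ 0)
    (hφF : φ (aeval (fun i ↦ X i ^ n i) F) = .C (aeval (fun i ↦ X i ^ n i) F)) :
    aeval (fun i ↦ (φ (X i)).leadingCoeff ^ n i) F = 0 := by
  have hw : IsWeightedHomogeneous (fun i ↦ (φ (X i)).natDegree)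
      (aeval (fun i ↦ X i ^ n i) F : MvPolynomial σ K) (g * δ) := by
    refine isWeightedHomogeneous_aeval (w := fun _ ↦ δ) (fun i ↦ ?_) fun s hs ↦ ?_
    · rw [← hδ i]
      exact (isWeightedHomogeneous_X K _ i).pow (n i)
    · rw [← hF hs]
      simp [Finsupp.weight_apply, Finsupp.sum, Finset.sum_mul]
  have h0 := hφ.aeval_leadingCoeff_eq_zero hφF (mul_ne_zero hg hδ0)
    fun s hs ↦ (hw (mem_support_iff.1 hs)).le
  rw [hw.weightedHomogeneousComponent_same, comp_aeval_apply] at h0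
  simpa using h0

end LeadingCoeffDeformation

section Plane

theorem weight_fin_two (w : Fin 2 → ℕ) (s : Fin 2 →₀ ℕ) :
    Finsupp.weight w s = s 0 * w 0 + s 1 * w 1 := by
  simp [Finsupp.weight_apply, Finsupp.sum_fintype]

theorem eq_of_weight_eq_of_weight_eq {w D : Fin 2 → ℕ} (hwD : w 0 * D 1 ≠ w 1 * D 0)
    {s t : Fin 2 →₀ ℕ} (hw : Finsupp.weight w s = Finsupp.weight w t)
    (hD : Finsupp.weight D s = Finsupp.weight D t) : s = t := by
  rw [weight_fin_two, weight_fin_two] at hw hD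
  zify at hw hD hwD
  rw [← sub_ne_zero] at hwD
  refine Finsupp.ext (Fin.forall_fin_two.2 ⟨?_, ?_⟩) <;>
    refine Nat.cast_injective (R := ℤ) (mul_right_cancel₀ hwD ?_)
  · linear_combination D 1 * hw - w 1 * hD
  · linear_combination w 0 * hD - D 0 * hw

variable {K : Type*} [Field K] {φ : MvPolynomial (Fin 2) K →ₐ[K] (MvPolynomial (Fin 2) K)[X]}
  {h : MvPolynomial (Fin 2) K}

theorem IsDeformation.weightedTotalDegree_eq_zero (hφ : IsDeformation φ) (hφh : φ h = .C h)
    (hh : h ≠ 0) {w : Fin 2 → ℕ} {d : ℕ} (hw : IsWeightedHomogeneous w h d)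
    (hne : w 0 * (φ (X 1)).natDegree ≠ w 1 * (φ (X 0)).natDegree) :
    weightedTotalDegree (fun i ↦ (φ (X i)).natDegree) h = 0 := by
  set D : Fin 2 → ℕ := fun i ↦ (φ (X i)).natDegree
  by_contra hM
  have h0 := hφ.aeval_leadingCoeff_eq_zero hφh hM fun s hs ↦ le_weightedTotalDegree D hs
  obtain ⟨s, hs, hsM : weightedTotalDegree D h = Finsupp.weight D s⟩ :=
    h.support.exists_mem_eq_sup (support_nonempty.2 hh) (Finsupp.weight D)
  have hmono : weightedHomogeneousComponent D (weightedTotalDegree D h) h =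
      monomial s (coeff s h) := by
    classical
    ext t
    rw [coeff_weightedHomogeneousComponent, coeff_monomial]
    by_cases hst : s = t
    · subst hst
      rw [if_pos hsM.symm, if_pos rfl]
    · rw [if_neg hst, ite_eq_right_iff]
      intro ht
      by_contra htc
      exact hst (eq_of_weight_eq_of_weight_eq hne
        ((hw (mem_support_iff.1 hs)).trans (hw htc).symm) (hsM.symm.trans ht.symm))
  rw [hmono, aeval_monomial, algebraMap_eq] at h0
  refine mul_ne_zero (C_ne_zero.2 (mem_support_iff.1 hs))
    (Finset.prod_ne_zero_iff.2 fun i _ ↦ ?_) h0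
  exact pow_ne_zero _ (Polynomial.leadingCoeff_ne_zero.2 (hφ.ne_zero (X_ne_zero i)))

theorem IsDeformation.mul_natDegree_eq_mul_natDegree (hφ : IsDeformation φ) (hφh : φ h = .C h)
    {w : Fin 2 → ℕ} {d : ℕ} (hw : IsWeightedHomogeneous w h d)
    (hvars : ∀ i, ∃ s ∈ h.support, s i ≠ 0) :
    w 0 * (φ (X 1)).natDegree = w 1 * (φ (X 0)).natDegree := by
  by_contra hne
  obtain ⟨s, hs, _⟩ := hvars 0
  have hM := hφ.weightedTotalDegree_eq_zero hφh (ne_zero_iff.2 ⟨s, mem_support_iff.1 hs⟩) hw hne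
  have hD (i : Fin 2) : (φ (X i)).natDegree = 0 := by
    obtain ⟨t, ht, hti⟩ := hvars i
    have hle := (le_weightedTotalDegree (fun i ↦ (φ (X i)).natDegree) ht).trans hM.le
    exact Nat.le_zero.1 ((Finsupp.le_weight_of_ne_zero (fun _ ↦ zero_le) hti).trans hle)
  exact hne (by rw [hD, hD, mul_zero, mul_zero])

end Plane

section BinaryForm

variable {K : Type*} [Field K] {F : MvPolynomial (Fin 2) K} {n : ℕ}

theorem natDegree_dehomogenize_le (hF : F.IsHomogeneous n) :
    (aeval ![Polynomial.X, 1] F : K[X]).natDegree ≤ n := by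
  simpa using aeval_natDegree_le F hF.totalDegree_le (![Polynomial.X, 1] : Fin 2 → K[X]) (n := 1)
    (Fin.forall_fin_two.2 ⟨Polynomial.natDegree_X_le, by simp⟩)

theorem aeval_dehomogenize {R : Type*} [CommRing R] [Algebra K R] (z : R) :
    Polynomial.aeval z (aeval ![Polynomial.X, 1] F : K[X]) = aeval ![z, 1] F := by
  rw [comp_aeval_apply]
  congr 2
  ext i
  fin_cases i <;> simp

theorem dehomogenize_ne_zero (hF : F.IsHomogeneous n) (hF0 : F ≠ 0) :
    (aeval ![Polynomial.X, 1] F : K[X]) ≠ 0 := by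
  intro h
  rw [← Polynomial.homogenize_eq_of_isHomogeneous hF h, Polynomial.homogenize_zero] at hF0
  exact hF0 rfl

theorem associated_of_aeval_eq_zero {R : Type*} [CommRing R] [IsDomain R] [IsIntegrallyClosed R]
    [Algebra K R] (hF : F.IsHomogeneous n) (hF0 : F ≠ 0)
    {u v : R} (hu : u ≠ 0) (hv : v ≠ 0) (h : aeval ![u, v] F = 0) : Associated u v := by
  let ι := algebraMap R (FractionRing R)
  have hι : Function.Injective ι := IsFractionRing.injective R (FractionRing R)
  have hu' : ι u ≠ 0 := (map_ne_zero_iff ι hι).2 hu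
  have hv' : ι v ≠ 0 := (map_ne_zero_iff ι hι).2 hv
  have hz : Polynomial.aeval (ι u / ι v) (aeval ![Polynomial.X, 1] F : K[X]) = 0 := by
    have huv : (fun i ↦ ![ι u / ι v, 1] i * ι v) = ι ∘ ![u, v] := by
      ext i
      fin_cases i <;> simp [hv']
    rw [aeval_dehomogenize]
    refine (mul_eq_zero.1 ?_).resolve_left (pow_ne_zero n hv')
    rw [← aeval_mul_of_isHomogeneous _ _ hF, huv, aeval_algebraMap_apply, h, map_zero]
  have hint : IsIntegral K (ι u / ι v) :=
    isAlgebraic_iff_isIntegral.1 ⟨_, dehomogenize_ne_zero hF hF0, hz⟩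
  obtain ⟨x, hx⟩ := IsIntegrallyClosed.isIntegral_iff.1 (hint.tower_top (A := R))
  obtain ⟨y, hy⟩ := IsIntegrallyClosed.isIntegral_iff.1 (hint.inv.tower_top (A := R))
  refine (associated_of_dvd_dvd ⟨x, hι ?_⟩ ⟨y, hι ?_⟩).symm
  · rw [map_mul, hx, mul_div_cancel₀ _ hv']
  · rw [map_mul, hy, inv_div, mul_div_cancel₀ _ hu']

theorem exists_eq_X_sub_C_mul_X_pow_mul (hF : F.IsHomogeneous n) (hF0 : F ≠ 0) (c : K) :
    ∃ r m G, r + m = n ∧ G.IsHomogeneous m ∧ aeval ![c, 1] G ≠ 0 ∧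
      F = (X 0 - C c * X 1) ^ r * G := by
  set p : K[X] := aeval ![Polynomial.X, 1] F with hp
  have hp0 : p ≠ 0 := dehomogenize_ne_zero hF hF0
  obtain ⟨q, hpq, hq⟩ := Polynomial.exists_eq_pow_rootMultiplicity_mul_and_not_dvd p hp0 c
  set r := p.rootMultiplicity c
  have hdeg : r + q.natDegree ≤ n := by
    have hq0 : q ≠ 0 := fun hq0 ↦ hq (hq0 ▸ dvd_zero _)
    have hdeg := natDegree_dehomogenize_le hF
    rwa [← hp, hpq, Polynomial.natDegree_mul (pow_ne_zero r (Polynomial.X_sub_C_ne_zero c)) hq0,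
      Polynomial.natDegree_pow, Polynomial.natDegree_X_sub_C, mul_one] at hdeg
  obtain ⟨m, rfl⟩ := Nat.exists_eq_add_of_le (le_of_add_le_left hdeg)
  have hqm : q.natDegree ≤ m := by lia
  have hlin : (X 0 - C c * X 1 : MvPolynomial (Fin 2) K).IsHomogeneous 1 :=
    (isHomogeneous_X K 0).sub (isHomogeneous_C_mul_X c 1)
  refine ⟨r, m, q.homogenize m, rfl, Polynomial.isHomogeneous_homogenize q, ?_, ?_⟩
  · rw [← aeval_dehomogenize, Polynomial.aeval_homogenize_X_one _ hqm]
    simpa [Polynomial.dvd_iff_isRoot] using hq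
  · rw [← Polynomial.homogenize_eq_of_isHomogeneous hF rfl]
    refine Polynomial.homogenize_eq_of_isHomogeneous ?_ ?_
    · simpa using (hlin.pow r).mul (Polynomial.isHomogeneous_homogenize q)
    · simpa [Polynomial.aeval_homogenize_X_one _ hqm] using hpq.symm

end BinaryForm

section PlaneDeformation

variable {K : Type*} [Field K] {φ : MvPolynomial (Fin 2) K →ₐ[K] (MvPolynomial (Fin 2) K)[X]}
  {h : MvPolynomial (Fin 2) K}

theorem IsDeformation.exists_leadingCoeff_pow_eq (hφ : IsDeformation φ) {n : Fin 2 → ℕ}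
    {δ : ℕ} (hδ : ∀ i, n i * (φ (X i)).natDegree = δ) (hδ0 : δ ≠ 0)
    {F : MvPolynomial (Fin 2) K} {g : ℕ} (hF : F.IsHomogeneous g) (hg : g ≠ 0) (hF0 : F ≠ 0)
    (hφF : φ (aeval (fun i ↦ X i ^ n i) F) = .C (aeval (fun i ↦ X i ^ n i) F)) :
    ∃ c : K, c ≠ 0 ∧
      (φ (X 0)).leadingCoeff ^ n 0 = C c * (φ (X 1)).leadingCoeff ^ n 1 := by
  have hne (i : Fin 2) : (φ (X i)).leadingCoeff ^ n i ≠ 0 :=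
    pow_ne_zero _ (Polynomial.leadingCoeff_ne_zero.2 (hφ.ne_zero (X_ne_zero i)))
  have hFu := hφ.aeval_leadingCoeff_pow_eq_zero hδ hδ0 hF hg hφF
  rw [show (fun i ↦ (φ (X i)).leadingCoeff ^ n i) = ![_, _] from
    funext (Fin.forall_fin_two.2 ⟨rfl, rfl⟩)] at hFu
  obtain ⟨u, hu⟩ := (associated_of_aeval_eq_zero hF hF0 (hne 0) (hne 1) hFu).symm
  obtain ⟨c, hc, hcu⟩ := isUnit_iff_eq_C_of_isReduced.1 u.isUnit
  exact ⟨c, hc.ne_zero, by rw [← hu, hcu, mul_comm]⟩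

theorem IsDeformation.exists_eq_C_mul_pow (hφ : IsDeformation φ) (hφh : φ h = .C h) (hh : h ≠ 0)
    {n : Fin 2 → ℕ} {δ : ℕ} (hδ : ∀ i, n i * (φ (X i)).natDegree = δ) (hδ0 : δ ≠ 0)
    {F : MvPolynomial (Fin 2) K} {g : ℕ} (hF : F.IsHomogeneous g) (hg : g ≠ 0)
    (hFh : aeval (fun i ↦ X i ^ n i) F = h) :
    ∃ c l : K, l ≠ 0 ∧ h = C c * (X 0 ^ n 0 - C l * X 1 ^ n 1) ^ g := by
  have hF0 : F ≠ 0 := by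
    rintro rfl
    exact hh (hFh ▸ map_zero _)
  obtain ⟨l, hl, hlc⟩ := hφ.exists_leadingCoeff_pow_eq hδ hδ0 hF hg hF0 (hFh ▸ hφh)
  obtain ⟨r, m, G, rfl, hG, hGl, rfl⟩ := exists_eq_X_sub_C_mul_X_pow_mul hF hF0 l
  have hfac : h = (X 0 ^ n 0 - C l * X 1 ^ n 1) ^ r * aeval (fun i ↦ X i ^ n i) G := by
    simp [← hFh, algebraMap_eq]
  have hm : m = 0 := by
    by_contra hm
    have hφG := hφ.eq_C_of_dvd hh hφh (Dvd.intro_left _ hfac.symm)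
    have hG0 := hφ.aeval_leadingCoeff_pow_eq_zero hδ hδ0 hG hm hφG
    have hlc' : (fun i ↦ (φ (X i)).leadingCoeff ^ n i) =
        fun i ↦ (C ∘ ![l, 1]) i * (φ (X 1)).leadingCoeff ^ n 1 := by
      ext1 i
      fin_cases i <;> simp [hlc]
    rw [hlc', aeval_mul_of_isHomogeneous _ _ hG, ← algebraMap_eq, aeval_algebraMap_apply] at hG0
    refine mul_ne_zero (pow_ne_zero _ (pow_ne_zero _ ?_)) ?_ hG0
    · exact Polynomial.leadingCoeff_ne_zero.2 (hφ.ne_zero (X_ne_zero 1))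
    · simpa [algebraMap_eq] using hGl
  subst hm
  obtain ⟨c, rfl⟩ : ∃ c, G = C c :=
    ⟨_, totalDegree_eq_zero_iff_eq_C.1 (Nat.le_zero.1 hG.totalDegree_le)⟩
  refine ⟨c, l, hl, ?_⟩
  rw [hfac, aeval_C, algebraMap_eq, mul_comm, add_zero]

theorem IsDeformation.exists_mem_support_eq_zero (hφ : IsDeformation φ) (hφh : φ h = .C h)
    (hh : h ≠ 0) {i : Fin 2} (hi : (φ (X i)).natDegree ≠ 0) : ∃ s ∈ h.support, s i = 0 := by
  contrapose! hi
  have hdvd : X i ∣ h := by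
    rw [h.as_sum]
    exact Finset.dvd_sum fun s hs ↦ X_dvd_monomial.2 (.inr (hi s hs))
  rw [hφ.eq_C_of_dvd hh hφh hdvd, Polynomial.natDegree_C]

theorem IsDeformation.natDegree_ne_zero (hφ : IsDeformation φ)
    (hne : ∃ f, φ f ≠ .C f) {w : Fin 2 → ℕ} (hw : ∀ i, w i ≠ 0)
    (hmul : w 0 * (φ (X 1)).natDegree = w 1 * (φ (X 0)).natDegree) (i : Fin 2) :
    (φ (X i)).natDegree ≠ 0 := by
  intro hi
  have hall : ∀ j, (φ (X j)).natDegree = 0 := by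
    fin_cases i
    · have h1 : w 0 * (φ (X 1)).natDegree = 0 := hmul.trans (mul_eq_zero_of_right _ hi)
      exact Fin.forall_fin_two.2 ⟨hi, (mul_eq_zero.1 h1).resolve_left (hw 0)⟩
    · have h0 : w 1 * (φ (X 0)).natDegree = 0 := hmul.symm.trans (mul_eq_zero_of_right _ hi)
      exact Fin.forall_fin_two.2 ⟨(mul_eq_zero.1 h0).resolve_left (hw 1), hi⟩
  obtain ⟨f, hf⟩ := hne
  obtain ⟨j, hj⟩ := exists_X_ne_C_of_ne_C hf
  exact hj (hφ.eq_C_of_natDegree_eq_zero (hall j))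

theorem exists_isHomogeneous_of_coprime {R : Type*} [CommRing R] {h : MvPolynomial (Fin 2) R}
    {w : Fin 2 → ℕ} {d : ℕ} (hw : IsWeightedHomogeneous w h d) (hw0 : ∀ i, w i ≠ 0)
    (hcop : (w 0).Coprime (w 1)) (hsupp : ∀ i, ∃ s ∈ h.support, s i = 0) :
    ∃ (g : ℕ) (F : MvPolynomial (Fin 2) R), d = w 0 * w 1 * g ∧ F.IsHomogeneous g ∧
      aeval (fun i ↦ X i ^ ![w 1, w 0] i) F = h := by
  have hweight (s) (hs : s ∈ h.support) : s 0 * w 0 + s 1 * w 1 = d := by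
    rw [← weight_fin_two, hw (mem_support_iff.1 hs)]
  obtain ⟨s, hs, hs0⟩ := hsupp 0
  obtain ⟨t, ht, ht1⟩ := hsupp 1
  have h0 : w 0 ∣ d := ⟨t 0, by rw [← hweight t ht, ht1, zero_mul, add_zero, mul_comm]⟩
  have h1 : w 1 ∣ d := ⟨s 1, by rw [← hweight s hs, hs0, zero_mul, zero_add, mul_comm]⟩
  obtain ⟨g, rfl⟩ := hcop.mul_dvd_of_dvd_of_dvd h0 h1
  have hdvd (u) (hu : u ∈ h.support) : ∀ i, ![w 1, w 0] i ∣ u i := by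
    refine Fin.forall_fin_two.2
      ⟨hcop.symm.dvd_of_dvd_mul_right ?_, hcop.dvd_of_dvd_mul_right ?_⟩
    · exact (Nat.dvd_add_left (dvd_mul_left _ _)).1 (hweight u hu ▸ h1)
    · exact (Nat.dvd_add_right (dvd_mul_left _ _)).1 (hweight u hu ▸ h0)
  obtain ⟨F, hF, hFh⟩ := exists_isHomogeneous_aeval_X_pow_eq (n := ![w 1, w 0])
    (mul_ne_zero (hw0 0) (hw0 1)) (Fin.forall_fin_two.2 ⟨mul_comm _ _, rfl⟩) hw hdvd
  exact ⟨g, F, rfl, hF, hFh⟩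

theorem IsDeformationInvariant.exists_eq_C_mul_pow (hh : IsDeformationInvariant K h)
    {w : Fin 2 → ℕ} {d : ℕ} (hw : IsWeightedHomogeneous w h d) (hw0 : ∀ i, w i ≠ 0)
    (hcop : (w 0).Coprime (w 1)) (hvars : ∀ i, ∃ s ∈ h.support, s i ≠ 0) :
    (w 0 = 1 ∨ w 1 = 1) ∧ (∃ t ∈ h.support, t 1 = 0) ∧ ∃ (c l : K) (g : ℕ), g ≠ 0 ∧
      d = w 0 * w 1 * g ∧ h = C c * (X 0 ^ w 1 - C l * X 1 ^ w 0) ^ g := by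
  obtain ⟨φ, hφ, hne, hφh⟩ := hh
  obtain ⟨s, hs, hs0⟩ := hvars 0
  have hh0 : h ≠ 0 := ne_zero_iff.2 ⟨s, mem_support_iff.1 hs⟩
  have hmul := hφ.mul_natDegree_eq_mul_natDegree hφh hw hvars
  have hdeg := hφ.natDegree_ne_zero hne hw0 hmul
  have hsupp (i : Fin 2) := hφ.exists_mem_support_eq_zero hφh hh0 (hdeg i)
  obtain ⟨g, F, rfl, hF, hFh⟩ := exists_isHomogeneous_of_coprime hw hw0 hcop hsupp
  have hg : g ≠ 0 := by
    rintro rfl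
    have := Finsupp.le_weight_of_ne_zero (w := w) (fun _ ↦ zero_le) hs0
    rw [hw (mem_support_iff.1 hs)] at this
    exact hw0 0 (Nat.le_zero.1 this)
  obtain ⟨c, l, hl, hform : h = C c * (X 0 ^ w 1 - C l * X 1 ^ w 0) ^ g⟩ :=
    hφ.exists_eq_C_mul_pow hφh hh0 (δ := w 1 * (φ (X 0)).natDegree)
      (Fin.forall_fin_two.2 ⟨rfl, hmul⟩) (mul_ne_zero (hw0 1) (hdeg 0)) hF hg hFh
  have hinv := hφ.eq_C_of_dvd hh0 hφh (hform ▸ (dvd_pow_self _ hg).mul_left _)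
  refine ⟨?_, hsupp 1, c, l, g, hg, rfl, hform⟩
  refine (eq_one_or_eq_one_of_C_mul_pow_add_C_mul_pow_eq_C (i := 0) (j := 1) zero_ne_one (hdeg 0)
    (hdeg 1) hcop.symm one_ne_zero (neg_ne_zero.2 hl) ?_).symm
  have hφC : φ (C l) = .C (C l) := φ.commutes l
  simp only [map_sub, map_mul, map_pow, hφC] at hinv
  simp only [map_one, map_neg, map_add, map_mul, map_pow]
  linear_combination hinv

end PlaneDeformation

section Shear

variable {R : Type*} [CommRing R]

/-- The elementary automorphism `(x, y) ↦ (x + c * y ^ a, y)` of `R[x, y]`. -/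
def shear (c : R) (a : ℕ) : MvPolynomial (Fin 2) R ≃ₐ[R] MvPolynomial (Fin 2) R :=
  AlgEquiv.ofAlgHom (aeval ![X 0 + C c * X 1 ^ a, X 1]) (aeval ![X 0 - C c * X 1 ^ a, X 1])
    (algHom_ext (Fin.forall_fin_two.2 (by simp [algebraMap_eq])))
    (algHom_ext (Fin.forall_fin_two.2 (by simp [algebraMap_eq])))

theorem weightedHomogeneousComponent_shear (c : R) (a n : ℕ) (f : MvPolynomial (Fin 2) R) :
    weightedHomogeneousComponent ![a, 1] n (shear c a f) =
      shear c a (weightedHomogeneousComponent ![a, 1] n f) := by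
  have h0 : IsWeightedHomogeneous ![a, 1] (X 0 : MvPolynomial (Fin 2) R) a :=
    isWeightedHomogeneous_X R ![a, 1] 0
  have h1 : IsWeightedHomogeneous ![a, 1] (X 1 : MvPolynomial (Fin 2) R) 1 :=
    isWeightedHomogeneous_X R ![a, 1] 1
  refine weightedHomogeneousComponent_aeval (Fin.forall_fin_two.2 ⟨h0.add ?_, h1⟩) f n
  simpa using (h1.pow a).C_mul c

theorem shear_C_mul_X_sub_C_mul_X_pow_pow (c d : R) (a n : ℕ) :
    shear c a (C d * (X 0 - C c * X 1 ^ a) ^ n) = C d * X 0 ^ n := by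
  simp [shear, algebraMap_eq]

theorem eq_single_or_weight_lt_of_mem_support_shear {c d : R} {a n : ℕ}
    {f : MvPolynomial (Fin 2) R} (hf : weightedTotalDegree ![a, 1] f ≤ a * n)
    (htop : weightedHomogeneousComponent ![a, 1] (a * n) f = C d * (X 0 - C c * X 1 ^ a) ^ n)
    {s : Fin 2 →₀ ℕ} (hs : s ∈ (shear c a f).support) :
    s = Finsupp.single 0 n ∨ Finsupp.weight ![a, 1] s < a * n := by
  classical
  have hcoeff : coeff s (shear c a (weightedHomogeneousComponent ![a, 1]
      (Finsupp.weight ![a, 1] s) f)) ≠ 0 := by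
    rwa [← weightedHomogeneousComponent_shear, coeff_weightedHomogeneousComponent, if_pos rfl,
      ← mem_support_iff]
  obtain hlt | heq | hgt := lt_trichotomy (Finsupp.weight ![a, 1] s) (a * n)
  · exact .inr hlt
  · rw [heq, htop, shear_C_mul_X_sub_C_mul_X_pow_pow, coeff_C_mul, coeff_X_pow] at hcoeff
    refine .inl ?_
    by_contra hne
    exact hcoeff (by rw [if_neg (Ne.symm hne), mul_zero])
  · rw [weightedHomogeneousComponent_eq_zero _ _ (hf.trans_lt hgt), map_zero, coeff_zero] at hcoeff
    exact absurd rfl hcoeff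

theorem degreeOf_shear_le {c d : R} {a n : ℕ} (ha : a ≠ 0)
    {f : MvPolynomial (Fin 2) R} (hf : weightedTotalDegree ![a, 1] f ≤ a * n)
    (htop : weightedHomogeneousComponent ![a, 1] (a * n) f = C d * (X 0 - C c * X 1 ^ a) ^ n) :
    degreeOf 0 (shear c a f) ≤ n := by
  refine degreeOf_le_iff.2 fun s hs ↦ ?_
  obtain rfl | hlt := eq_single_or_weight_lt_of_mem_support_shear hf htop hs
  · rw [Finsupp.single_eq_same]
  · refine le_of_mul_le_mul_left (le_trans ?_ hlt.le) ha.bot_lt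
    rw [weight_fin_two, mul_comm]
    exact Nat.le_add_right _ _

theorem degreeOf_shear_lt {c d : R} {a n : ℕ} (han : a * n ≠ 0)
    {f : MvPolynomial (Fin 2) R} (hf : weightedTotalDegree ![a, 1] f ≤ a * n)
    (htop : weightedHomogeneousComponent ![a, 1] (a * n) f = C d * (X 0 - C c * X 1 ^ a) ^ n) :
    degreeOf 1 (shear c a f) < a * n := by
  refine (degreeOf_lt_iff han.bot_lt).2 fun s hs ↦ ?_
  obtain rfl | hlt := eq_single_or_weight_lt_of_mem_support_shear hf htop hs
  · simpa using han.bot_lt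
  · refine lt_of_le_of_lt ?_ hlt
    simp [weight_fin_two]

end Shear

section NewtonDescent

theorem exists_mem_support_eq_degreeOf {σ R : Type*} [CommSemiring R] {f : MvPolynomial σ R}
    (hf : f ≠ 0) (i : σ) : ∃ s ∈ f.support, s i = degreeOf i f := by
  obtain ⟨s, hs, hsup⟩ := f.support.exists_mem_eq_sup (support_nonempty.2 hf) fun s ↦ s i
  exact ⟨s, hs, by rw [degreeOf_eq_sup, hsup]⟩

theorem exists_mem_support_weightedHomogeneousComponent_ne_zero {R : Type*} [CommSemiring R]
    {f : MvPolynomial (Fin 2) R} {w : Fin 2 → ℕ} {e : ℕ} (he : e ≠ 0)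
    (hw : ∀ i, degreeOf i f * w i = e) (i : Fin 2) :
    ∃ s ∈ (weightedHomogeneousComponent w (weightedTotalDegree w f) f).support, s i ≠ 0 := by
  classical
  simp only [support_weightedHomogeneousComponent, Finset.mem_filter]
  have hf : f ≠ 0 := by
    rintro rfl
    exact he (by rw [← hw i, degreeOf_zero, zero_mul])
  obtain ⟨u, hu, hui⟩ := exists_mem_support_eq_degreeOf hf i
  obtain ⟨z, hz, hzd⟩ := f.support.exists_mem_eq_sup (support_nonempty.2 hf) (Finsupp.weight w)
  by_cases hzi : z i = 0
  · have heu : e ≤ Finsupp.weight w u := by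
      rw [← hw i, ← hui, weight_fin_two]
      fin_cases i
      exacts [Nat.le_add_right _ _, Nat.le_add_left _ _]
    have hze : Finsupp.weight w z ≤ e := by
      rw [weight_fin_two]
      fin_cases i <;> simp only [Fin.zero_eta, Fin.mk_one] at hzi <;>
        rw [hzi, zero_mul]
      · rw [zero_add, ← hw 1]
        exact Nat.mul_le_mul_right _ (monomial_le_degreeOf 1 hz)
      · rw [add_zero, ← hw 0]
        exact Nat.mul_le_mul_right _ (monomial_le_degreeOf 0 hz)
    refine ⟨u, ⟨hu, (le_weightedTotalDegree w hu).antisymm ?_⟩, ?_⟩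
    · exact hzd.le.trans (hze.trans heu)
    · rw [hui]
      exact left_ne_zero_of_mul (hw i ▸ he)
  · exact ⟨z, ⟨hz, hzd.symm⟩, hzi⟩

variable {K : Type*} [Field K] {f : MvPolynomial (Fin 2) K}

theorem IsDeformationInvariant.exists_degreeOf_shear_lt (hf : IsDeformationInvariant K f)
    (h0 : degreeOf 0 f ≠ 0) (hle : degreeOf 0 f ≤ degreeOf 1 f) :
    ∃ (c : K) (a : ℕ), degreeOf 0 (shear c a f) ≤ degreeOf 0 f ∧
      degreeOf 1 (shear c a f) < degreeOf 1 f := by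
  obtain ⟨b, a, hba, hb, ha⟩ := Nat.exists_coprime (degreeOf 0 f) (degreeOf 1 f)
  set q := (degreeOf 0 f).gcd (degreeOf 1 f)
  have hb0 : b ≠ 0 := left_ne_zero_of_mul (hb ▸ h0)
  have hq0 : q ≠ 0 := right_ne_zero_of_mul (hb ▸ h0)
  have hab : b ≤ a := le_of_mul_le_mul_right (hb ▸ ha ▸ hle) hq0.bot_lt
  have ha0 : a ≠ 0 := fun h ↦ hb0 (Nat.le_zero.1 (hab.trans h.le))
  have hw : ∀ i, degreeOf i f * ![a, b] i = a * b * q :=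
    Fin.forall_fin_two.2
      ⟨(congrArg (· * a) hb).trans (by ring), (congrArg (· * b) ha).trans (by ring)⟩
  have hvars := exists_mem_support_weightedHomogeneousComponent_ne_zero
    (mul_ne_zero (mul_ne_zero ha0 hb0) hq0) hw
  obtain ⟨hone, ⟨t, ht, ht1⟩, d, c, g, hg, hdg, hform⟩ :=
    (hf.weightedHomogeneousComponent fun s hs ↦
      le_weightedTotalDegree ![a, b] hs).exists_eq_C_mul_pow
      (weightedHomogeneousComponent_isWeightedHomogeneous _ _)
      (Fin.forall_fin_two.2 ⟨ha0, hb0⟩) hba.symm hvars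
  simp only [Matrix.cons_val_zero, Matrix.cons_val_one] at hone hdg hform
  obtain rfl : b = 1 := by lia
  rw [mul_one] at hdg
  rw [hdg, pow_one] at hform
  classical
  rw [support_weightedHomogeneousComponent, Finset.mem_filter, hdg, weight_fin_two, ht1, zero_mul,
    add_zero, mul_comm] at ht
  have hgt : t 0 = g := Nat.eq_of_mul_eq_mul_left ha0.bot_lt ht.2
  have hgm : g ≤ degreeOf 0 f := hgt ▸ monomial_le_degreeOf 0 ht.1
  refine ⟨c, a, (degreeOf_shear_le ha0 hdg.le hform).trans hgm,
    (degreeOf_shear_lt (mul_ne_zero ha0 hg) hdg.le hform).trans_le ?_⟩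
  rw [ha]
  exact Nat.mul_le_mul_left a (hgm.trans (hb.le.trans (one_mul q).le))

theorem IsDeformationInvariant.exists_algEquiv_degreeOf_lt (hf : IsDeformationInvariant K f)
    (h0 : degreeOf 0 f ≠ 0) (h1 : degreeOf 1 f ≠ 0) :
    ∃ e : MvPolynomial (Fin 2) K ≃ₐ[K] MvPolynomial (Fin 2) K,
      degreeOf 0 (e f) + degreeOf 1 (e f) < degreeOf 0 f + degreeOf 1 f := by
  obtain hle | hle := le_total (degreeOf 0 f) (degreeOf 1 f)
  · obtain ⟨c, a, hle0, hlt1⟩ := hf.exists_degreeOf_shear_lt h0 hle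
    exact ⟨shear c a, add_lt_add_of_le_of_lt hle0 hlt1⟩
  · let e := renameEquiv K (Equiv.swap (0 : Fin 2) 1)
    have he0 : degreeOf 0 (e f) = degreeOf 1 f :=
      degreeOf_rename_of_injective (Equiv.swap (0 : Fin 2) 1).injective 1
    have he1 : degreeOf 1 (e f) = degreeOf 0 f :=
      degreeOf_rename_of_injective (Equiv.swap (0 : Fin 2) 1).injective 0
    obtain ⟨c, a, hle0, hlt1⟩ := (hf.map_algEquiv e).exists_degreeOf_shear_lt (he0 ▸ h1)
      (he0 ▸ he1 ▸ hle)
    refine ⟨e.trans (shear c a), (add_lt_add_of_le_of_lt hle0 hlt1).trans_eq ?_⟩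
    rw [he0, he1, add_comm]

end NewtonDescent

section Variable

/-- `f` lies in `R[w]` for some variable `w` of `R[x, y]`, that is, for some `w` which an
automorphism of the `R`-algebra `R[x, y]` sends to `x`. -/
def IsPolynomialInVariable (R : Type*) [CommRing R] (f : MvPolynomial (Fin 2) R) : Prop :=
  ∃ w, (∃ e : MvPolynomial (Fin 2) R ≃ₐ[R] MvPolynomial (Fin 2) R, e w = X 0) ∧
    f ∈ Algebra.adjoin R {w}

theorem IsPolynomialInVariable.of_map_algEquiv {R : Type*} [CommRing R]
    {f : MvPolynomial (Fin 2) R} (e : MvPolynomial (Fin 2) R ≃ₐ[R] MvPolynomial (Fin 2) R)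
    (h : IsPolynomialInVariable R (e f)) : IsPolynomialInVariable R f := by
  obtain ⟨w, ⟨e', hw⟩, hf⟩ := h
  refine ⟨e.symm w, ⟨e.trans e', by simpa using hw⟩, ?_⟩
  have hmem : e.symm (e f) ∈ (Algebra.adjoin R {w}).map e.symm.toAlgHom := ⟨e f, hf, rfl⟩
  rwa [AlgHom.map_adjoin_singleton, e.symm_apply_apply] at hmem

theorem isPolynomialInVariable_of_degreeOf_eq_zero {R : Type*} [CommRing R]
    {f : MvPolynomial (Fin 2) R} {i : Fin 2} (hi : degreeOf i f = 0) :
    IsPolynomialInVariable R f := by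
  refine ⟨X (Equiv.swap 0 1 i), ⟨renameEquiv R (Equiv.swap 0 (Equiv.swap 0 1 i)), by simp⟩, ?_⟩
  rw [← Set.image_singleton, ← supported_eq_adjoin_X, mem_supported]
  intro j hj
  obtain ⟨s, hs, hsj⟩ := (mem_vars_iff_mem_support j).1 hj
  have hji : j ≠ i := by
    rintro rfl
    exact Finsupp.mem_support_iff.1 hsj (Nat.le_zero.1 (hi ▸ monomial_le_degreeOf j hs))
  have swap_of_ne : ∀ i j : Fin 2, j ≠ i → j = Equiv.swap 0 1 i := by decide
  exact swap_of_ne i j hji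

theorem IsDeformationInvariant.isPolynomialInVariable {K : Type*} [Field K]
    {f : MvPolynomial (Fin 2) K} (hf : IsDeformationInvariant K f) :
    IsPolynomialInVariable K f := by
  induction hN : degreeOf 0 f + degreeOf 1 f using Nat.strong_induction_on generalizing f with
  | _ N ih =>
    by_cases h0 : degreeOf 0 f = 0
    · exact isPolynomialInVariable_of_degreeOf_eq_zero h0
    by_cases h1 : degreeOf 1 f = 0
    · exact isPolynomialInVariable_of_degreeOf_eq_zero h1
    obtain ⟨e, he⟩ := hf.exists_algEquiv_degreeOf_lt h0 h1
    exact .of_map_algEquiv e (ih _ (hN ▸ he) (hf.map_algEquiv e) rfl)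

theorem isDeformationInvariant_iff_isPolynomialInVariable {K : Type*} [Field K]
    {f : MvPolynomial (Fin 2) K} : IsDeformationInvariant K f ↔ IsPolynomialInVariable K f := by
  refine ⟨IsDeformationInvariant.isPolynomialInVariable, fun ⟨w, ⟨e, he⟩, hf⟩ ↦ ?_⟩
  have hw := (isDeformationInvariant_X (K := K) (zero_ne_one (α := Fin 2))).map_algEquiv e.symm
  rw [← he, e.symm_apply_apply] at hw
  exact hw.of_mem_adjoin hf

end Variable

theorem reduction_of_variable_mod_p_general {A F κ : Type*} [CommRing A] [IsDomain A]
    [WfDvdMonoid A] [Field F] [Algebra A F] [IsFractionRing A F] [Field κ] {p : A} (hp : p ≠ 0)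
    {π : A →+* κ} (hπ : RingHom.ker π = Ideal.span {p}) {v : MvPolynomial (Fin 2) A}
    (hv : IsPolynomialInVariable F (map (algebraMap A F) v)) :
    IsPolynomialInVariable κ (map π v) :=
  isDeformationInvariant_iff_isPolynomialInVariable.1 <|
    (isDeformationInvariant_iff_isPolynomialInVariable.2 hv).map_of_isFractionRing hp hπ

/-- **Lemma 3.8 (Blanc–van Santen).** Let `p ∈ k[t]` be irreducible and `k_p = k[t]/(p)`.
If `v ∈ k[t][x,y]` is a variable of the `k(t)`-algebra `k(t)[x,y]`, then its reduction
`v₀ ∈ k_p[x,y]` lies in `k_p[w]` for some variable `w` of the `k_p`-algebra `k_p[x,y]`. -/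
theorem reduction_of_variable_mod_p
    (k : Type*) [Field k] (p : Polynomial k) (hp : Irreducible p)
    (v : MvPolynomial (Fin 2) (Polynomial k))
    (hv : ∃ ψ : MvPolynomial (Fin 2) (RatFunc k) ≃ₐ[RatFunc k] MvPolynomial (Fin 2) (RatFunc k),
        ψ (MvPolynomial.map (algebraMap (Polynomial k) (RatFunc k)) v) = X 0) :
    ∃ w : MvPolynomial (Fin 2) (Polynomial k ⧸ Ideal.span {p}),
      (∃ σ : MvPolynomial (Fin 2) (Polynomial k ⧸ Ideal.span {p}) ≃ₐ[Polynomial k ⧸ Ideal.span {p}]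
            MvPolynomial (Fin 2) (Polynomial k ⧸ Ideal.span {p}),
          σ w = X 0) ∧
      MvPolynomial.map (Ideal.Quotient.mk (Ideal.span {p})) v ∈
        Algebra.adjoin (Polynomial k ⧸ Ideal.span {p}) {w} := by
  have : (Ideal.span {p}).IsMaximal := PrincipalIdealRing.isMaximal_of_irreducible hp
  let _ : Field (Polynomial k ⧸ Ideal.span {p}) := Ideal.Quotient.field _
  have hv' : IsPolynomialInVariable (RatFunc k) (map (algebraMap k[X] (RatFunc k)) v) :=
    ⟨_, hv, Algebra.self_mem_adjoin_singleton _ _⟩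
  have hker : RingHom.ker (Ideal.Quotient.mk (Ideal.span {p})) = Ideal.span {p} := Ideal.mk_ker
  obtain ⟨w, hw, hvw⟩ := reduction_of_variable_mod_p_general hp.ne_zero hker hv'
  exact ⟨w, hw, hvw⟩
end
end

section
/- Let k be a field and P ∈ k[x,y]. Then the following are equivalent: (1) P is a variable of the k-algebra k[x,y], i.e., some k-algebra automorphism of k[x,y] sends P to x; (2) the k[t]-algebra k[t][x,y]/(P − t) is isomorphic to a polynomial ring in one variable over k[t]; (3) the k(t)-algebra k(t)[x,y]/(P − t) is isomorphic to a polynomial ring in one variable over k(t). -/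
open MvPolynomial

noncomputable section

open scoped Polynomial Polynomial.Bivariate

/-!
A polynomial generator of the generic fibre of `f = P` may be taken to be the image of some
`g ∈ k[x, y]`. Irreducible polynomials in `f` are then prime in `k[x, y]`, and the Jacobian
determinant `J` of `f` and `g` divides a nonzero polynomial in `f`, so it lies in `k[f]`. Over an
algebraically closed field, `k[f, g] ≠ k[x, y]` forces some `f - l` to divide some `g - m`, and
passing from `g` to `(g - m) / (f - l)` removes a prime factor of `J`. This stops with
`g = J h + b(f)` and `k[f, h] = k[x, y]`. For general `k`, a `k`-linear retraction of the algebraic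
closure onto `k` brings the equation `g = J h + b(f)` back to `k[x, y]`; it makes the Jacobian of
`f` and `h` equal to `1`, which again forces `k[f, h] = k[x, y]`.
-/

section BivariateEvaluation

variable {k A B : Type*} [CommRing k] [CommRing A] [Algebra k A] [CommRing B] [Algebra k B]

theorem aevalAeval_eq_aeval_comp (f g : A) :
    Polynomial.aevalAeval f g =
      (aeval ![f, g]).comp (Polynomial.Bivariate.equivMvPolynomial k).toAlgHom := by
  ext <;> simp

theorem range_aevalAeval (f g : A) :
    (Polynomial.aevalAeval (R := k) f g).range = Algebra.adjoin k {f, g} := by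
  rw [aevalAeval_eq_aeval_comp, ← Matrix.range_cons_cons_empty f g ![],
    Algebra.adjoin_range_eq_range_aeval]
  refine (AlgHom.range_comp _ _).trans ?_
  have hrange : (Polynomial.Bivariate.equivMvPolynomial k).toAlgHom.range = ⊤ :=
    (AlgHom.range_eq_top _).mpr (Polynomial.Bivariate.equivMvPolynomial k).surjective
  exact (congrArg _ hrange).trans (Algebra.map_top _)

theorem map_aevalAeval (φ : A →ₐ[k] B) (f g : A) (Q : k[X][Y]) :
    φ (Polynomial.aevalAeval f g Q) = Polynomial.aevalAeval (φ f) (φ g) Q := by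
  have h : φ.comp (Polynomial.aevalAeval f g) = Polynomial.aevalAeval (φ f) (φ g) := by
    ext <;> simp
  exact DFunLike.congr_fun h Q

theorem aevalAeval_algebraMap (c : k) (g : A) (Q : k[X][Y]) :
    Polynomial.aevalAeval (algebraMap k A c) g Q =
      Polynomial.aeval g (Q.map (Polynomial.evalRingHom c)) := by
  have h : Polynomial.aevalAeval (algebraMap k A c) g =
      (Polynomial.aeval g).comp (Polynomial.mapAlgHom (Polynomial.aeval c)) := by
    ext <;> simp
  exact DFunLike.congr_fun h Q

theorem C_X_sub_C_dvd_of_map_evalRingHom_eq_zero {c : k} {Q : k[X][Y]}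
    (h : Q.map (Polynomial.evalRingHom c) = 0) :
    Polynomial.C (Polynomial.X - Polynomial.C c) ∣ Q := by
  refine (Polynomial.C_dvd_iff_dvd_coeff _ _).mpr fun i => Polynomial.dvd_iff_isRoot.mpr ?_
  simpa using congrArg (Polynomial.coeff · i) h

end BivariateEvaluation

section Saturation

variable {k A : Type*} [CommRing k] [CommRing A] [Algebra k A]

theorem aeval_mem_of_mem {S : Subalgebra k A} {f : A} (hf : f ∈ S) (s : k[X]) :
    Polynomial.aeval f s ∈ S :=
  Algebra.adjoin_le (Set.singleton_subset_iff.mpr hf)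
    (Polynomial.aeval_mem_adjoin_singleton k f)

theorem mem_adjoin_pair_left (f g : A) : f ∈ Algebra.adjoin k {f, g} :=
  Algebra.subset_adjoin (Set.mem_insert f {g})

theorem aeval_mem_adjoin_pair (f g : A) (s : k[X]) :
    Polynomial.aeval f s ∈ Algebra.adjoin k {f, g} :=
  aeval_mem_of_mem (mem_adjoin_pair_left f g) s

theorem mem_adjoin_pair_right (f g : A) : g ∈ Algebra.adjoin k {f, g} :=
  Algebra.subset_adjoin (Set.mem_insert_of_mem f rfl)

theorem adjoin_pair_le_of_mem {f g h : A} (hg : g ∈ Algebra.adjoin k {f, h}) :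
    Algebra.adjoin k {f, g} ≤ Algebra.adjoin k {f, h} :=
  Algebra.adjoin_le <| Set.insert_subset_iff.mpr
    ⟨mem_adjoin_pair_left f h, Set.singleton_subset_iff.mpr hg⟩

/-- The elements of `A` that some nonzero polynomial in `f` multiplies into the subalgebra `S`,
that is, the elements that lie in `S` after inverting `k[f] ∖ {0}`. -/
def polynomialSaturation (f : A) (S : Subalgebra k A) (hf : f ∈ S) : Subalgebra k A :=
  S.saturation ((nonZeroDivisors k[X]).map (Polynomial.aeval f))
    (Submonoid.map_le_iff_le_comap.mpr fun s _ => aeval_mem_of_mem hf s)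

theorem mem_polynomialSaturation [IsDomain k] {f : A} {S : Subalgebra k A} {hf : f ∈ S} {x : A} :
    x ∈ polynomialSaturation f S hf ↔ ∃ s : k[X], s ≠ 0 ∧ Polynomial.aeval f s * x ∈ S := by
  simp [polynomialSaturation]

variable (k) in
/-- `g` generates `A` over `k[f]` generically: every element of `A` lies in `k[f, g]` after
multiplication by a nonzero polynomial in `f`. For `f` transcendental over `k` in a domain `A`,
this says that `g` generates the `k(f)`-algebra `k(f) ⊗ A`, the generic fibre of `f`. -/
def IsGenericGenerator (f g : A) : Prop :=
  ∀ x : A, ∃ s : k[X], s ≠ 0 ∧ Polynomial.aeval f s * x ∈ Algebra.adjoin k {f, g}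

theorem isGenericGenerator_of_adjoin_eq_top [IsDomain k] {f g : A} {G : Set A}
    (hG : Algebra.adjoin k G = ⊤)
    (h : ∀ x ∈ G, ∃ s : k[X], s ≠ 0 ∧ Polynomial.aeval f s * x ∈ Algebra.adjoin k {f, g}) :
    IsGenericGenerator k f g := by
  have hsat : Algebra.adjoin k G ≤
      polynomialSaturation f (Algebra.adjoin k {f, g}) (mem_adjoin_pair_left f g) :=
    Algebra.adjoin_le fun x hx => mem_polynomialSaturation.mpr (h x hx)
  intro x
  exact mem_polynomialSaturation.mp (hsat (hG ▸ Algebra.mem_top))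

theorem IsGenericGenerator.of_mem_adjoin {f g h : A} (hg : IsGenericGenerator k f g)
    (hgh : g ∈ Algebra.adjoin k {f, h}) : IsGenericGenerator k f h := fun x =>
  let ⟨s, hs, hx⟩ := hg x
  ⟨s, hs, adjoin_pair_le_of_mem hgh hx⟩

theorem IsGenericGenerator.of_eq_aeval_mul_add_aeval {f g h : A} (hg : IsGenericGenerator k f g)
    {a b : k[X]} (hgh : g = Polynomial.aeval f a * h + Polynomial.aeval f b) :
    IsGenericGenerator k f h := by
  refine hg.of_mem_adjoin (hgh ▸ ?_)
  exact add_mem (mul_mem (aeval_mem_adjoin_pair f h a) (mem_adjoin_pair_right f h))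
    (aeval_mem_adjoin_pair f h b)

theorem aeval_ne_zero_of_transcendental {f : A} (hf : Transcendental k f) {s : k[X]}
    (hs : s ≠ 0) : Polynomial.aeval f s ≠ 0 :=
  fun h => hs (transcendental_iff.mp hf s h)

theorem IsGenericGenerator.isAlgebraic [IsDomain A] {f g : A}
    (hf : Transcendental k f) (hg : IsGenericGenerator k f g) :
    Algebra.IsAlgebraic (Algebra.adjoin k {f, g}) A where
  isAlgebraic x := by
    obtain ⟨s, hs, hx⟩ := hg x
    have halg (y : A) (hy : y ∈ Algebra.adjoin k {f, g}) :
        IsAlgebraic (Algebra.adjoin k {f, g}) y :=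
      isAlgebraic_algebraMap (⟨y, hy⟩ : Algebra.adjoin k {f, g})
    exact (halg _ (aeval_mem_adjoin_pair f g s)).of_mul
      (mem_nonZeroDivisors_of_ne_zero (aeval_ne_zero_of_transcendental hf hs)) (halg _ hx)

theorem IsGenericGenerator.adjoin_eq_top_of_forall_irreducible
    {k : Type*} [Field k] [Algebra k A] [IsDomain A] {f g : A}
    (hf : Transcendental k f) (hg : IsGenericGenerator k f g)
    (h : ∀ (p : k[X]) (Q : k[X][Y]), Irreducible p →
      Polynomial.aeval f p ∣ Polynomial.aevalAeval f g Q → Polynomial.C p ∣ Q) :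
    Algebra.adjoin k {f, g} = ⊤ := by
  have key (s : k[X]) (x : A) (hs : s ≠ 0)
      (hx : Polynomial.aeval f s * x ∈ Algebra.adjoin k {f, g}) :
      x ∈ Algebra.adjoin k {f, g} := by
    induction s using WfDvdMonoid.induction_on_irreducible with
    | zero => exact absurd rfl hs
    | unit u hu =>
      obtain ⟨v, hv⟩ := hu.exists_left_inv
      rw [← one_mul x, ← map_one (Polynomial.aeval (R := k) f), ← hv, map_mul, mul_assoc]
      exact mul_mem (aeval_mem_adjoin_pair f g v) hx
    | mul s p hs₁ hp ih =>
      rw [map_mul, mul_assoc, ← range_aevalAeval] at hx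
      obtain ⟨Q, hQ : Polynomial.aevalAeval f g Q = _⟩ := hx
      obtain ⟨R, rfl⟩ := h p Q hp ⟨_, hQ⟩
      rw [map_mul, Polynomial.aevalAeval_C] at hQ
      replace hQ := mul_left_cancel₀ (aeval_ne_zero_of_transcendental hf hp.ne_zero) hQ
      exact ih hs₁ (hQ ▸ range_aevalAeval (k := k) f g ▸ ⟨R, rfl⟩)
  refine eq_top_iff.mpr fun x _ => ?_
  obtain ⟨s, hs, hx⟩ := hg x
  exact key s x hs hx

end Saturation

section Prime

theorem isUnit_of_isUnit_aeval {σ k : Type*} [CommRing k] [IsDomain k] {f : MvPolynomial σ k}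
    (hf : Transcendental k f) {s : k[X]} (hs : IsUnit (Polynomial.aeval f s)) : IsUnit s := by
  obtain ⟨c, hc, hsc⟩ := isUnit_iff_eq_C_of_isReduced.mp hs
  have hsC : s = Polynomial.C c := by
    rw [← sub_eq_zero]
    apply transcendental_iff.mp hf
    rw [map_sub, Polynomial.aeval_C, hsc, MvPolynomial.algebraMap_eq, sub_self]
  exact hsC ▸ hc.map Polynomial.C

theorem exists_aeval_eq_of_aeval_mul_eq {σ k : Type*} [Field k] {f u : MvPolynomial σ k}
    (hf : Transcendental k f) {s t : k[X]} (hs : s ≠ 0)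
    (h : Polynomial.aeval f s * u = Polynomial.aeval f t) :
    ∃ w : k[X], Polynomial.aeval f w = u := by
  obtain ⟨t', s', c, hrel, rfl, rfl⟩ := UniqueFactorizationMonoid.exists_reduced_factors' t s hs
  rw [map_mul, map_mul, mul_assoc] at h
  replace h := mul_left_cancel₀
    (aeval_ne_zero_of_transcendental hf (left_ne_zero_of_mul hs)) h
  obtain ⟨a, b, hab⟩ := hrel.isCoprime
  have hunit : IsUnit (Polynomial.aeval f s') := by
    refine IsUnit.of_mul_eq_one (Polynomial.aeval f a * u + Polynomial.aeval f b) ?_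
    have := congrArg (Polynomial.aeval f) hab
    simp only [map_add, map_mul, map_one] at this
    linear_combination this + Polynomial.aeval f a * h
  obtain ⟨v, hv⟩ := (isUnit_of_isUnit_aeval hf hunit).exists_left_inv
  refine ⟨v * t', ?_⟩
  rw [map_mul, ← h, ← mul_assoc, ← map_mul, hv, map_one, one_mul]

variable {k : Type*} [Field k] {f g : MvPolynomial (Fin 2) k}

theorem IsGenericGenerator.aevalAeval_injective
    (hf : Transcendental k f) (hg : IsGenericGenerator k f g) :
    Function.Injective (Polynomial.aevalAeval (R := k) f g) := by
  have := hg.isAlgebraic hf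
  rw [← Matrix.range_cons_cons_empty f g ![]] at this
  have hbasis : IsTranscendenceBasis k ![f, g] :=
    Algebra.IsAlgebraic.isTranscendenceBasis_of_lift_le_trdeg_of_finite k ![f, g] (by
      rw [MvPolynomial.trdeg_of_isDomain]; simp)
  rw [aevalAeval_eq_aeval_comp]
  exact Function.Injective.comp (g := aeval (R := k) ![f, g]) hbasis.1
    (Polynomial.Bivariate.equivMvPolynomial k).injective

theorem IsGenericGenerator.exists_aeval_eq_of_dvd
    (hf : Transcendental k f) (hg : IsGenericGenerator k f g) {p : k[X]} (hp : p ≠ 0)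
    {u : MvPolynomial (Fin 2) k} (h : u ∣ Polynomial.aeval f p) :
    ∃ w : k[X], Polynomial.aeval f w = u := by
  obtain ⟨v, huv⟩ := h
  obtain ⟨s, hs, hu⟩ := hg u
  obtain ⟨t, ht, hv⟩ := hg v
  rw [← range_aevalAeval] at hu hv
  obtain ⟨U, hU : Polynomial.aevalAeval f g U = _⟩ := hu
  obtain ⟨V, hV : Polynomial.aevalAeval f g V = _⟩ := hv
  have hUV : U * V = Polynomial.C (s * t * p) := by
    apply hg.aevalAeval_injective hf
    rw [map_mul, hU, hV, Polynomial.aevalAeval_C, map_mul, map_mul, huv]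
    ring
  have hUV0 : U * V ≠ 0 := by simp [hUV, hs, ht, hp]
  have hdeg : U.natDegree = 0 := by
    have hsum := Polynomial.natDegree_mul (left_ne_zero_of_mul hUV0) (right_ne_zero_of_mul hUV0)
    rw [hUV, Polynomial.natDegree_C] at hsum
    omega
  rw [Polynomial.eq_C_of_natDegree_eq_zero hdeg, Polynomial.aevalAeval_C] at hU
  exact exists_aeval_eq_of_aeval_mul_eq hf hs hU.symm

theorem IsGenericGenerator.prime_aeval
    (hf : Transcendental k f) (hg : IsGenericGenerator k f g) {p : k[X]} (hp : Irreducible p) :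
    Prime (Polynomial.aeval f p) := by
  refine Irreducible.prime ⟨fun h => hp.not_isUnit (isUnit_of_isUnit_aeval hf h), ?_⟩
  intro u v huv
  obtain ⟨U, rfl⟩ := hg.exists_aeval_eq_of_dvd hf hp.ne_zero (huv ▸ dvd_mul_right u v)
  obtain ⟨V, rfl⟩ := hg.exists_aeval_eq_of_dvd hf hp.ne_zero (huv ▸ dvd_mul_left v _)
  have hpUV : p = U * V := transcendental_iff_injective.mp hf (by rw [huv, map_mul])
  exact (hp.isUnit_or_isUnit hpUV).imp (·.map _) (·.map _)

end Prime

section Jacobian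

theorem dvd_derivation_of_mem_adjoin {k A : Type*} [CommRing k] [CommRing A] [Algebra k A]
    (D : Derivation k A A) {S : Set A} {d q : A} (hS : ∀ x ∈ S, d ∣ D x)
    (hq : q ∈ Algebra.adjoin k S) : d ∣ D q := by
  induction hq using Algebra.adjoin_induction with
  | mem x hx => exact hS x hx
  | algebraMap r => simp
  | add x y _ _ hx hy => rw [map_add]; exact dvd_add hx hy
  | mul x y _ _ hx hy =>
    rw [D.leibniz]
    exact dvd_add (dvd_smul_of_dvd x hy) (dvd_smul_of_dvd y hx)

variable {k : Type*} [CommRing k]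

/-- The derivation `q ↦ ∂(f, q)/∂(x, y)` of `k[x, y]`, the Jacobian determinant of `f` and `q`
as a function of `q`. -/
def jacobianDerivation (f : MvPolynomial (Fin 2) k) :
    Derivation k (MvPolynomial (Fin 2) k) (MvPolynomial (Fin 2) k) :=
  pderiv 0 f • pderiv 1 - pderiv 1 f • pderiv 0

variable {f g : MvPolynomial (Fin 2) k}

theorem jacobianDerivation_apply (f g : MvPolynomial (Fin 2) k) :
    jacobianDerivation f g = pderiv 0 f * pderiv 1 g - pderiv 1 f * pderiv 0 g :=
  rfl

theorem jacobianDerivation_swap (f g : MvPolynomial (Fin 2) k) :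
    jacobianDerivation g f = -jacobianDerivation f g := by
  simp only [jacobianDerivation_apply]
  ring

theorem jacobianDerivation_self (f : MvPolynomial (Fin 2) k) : jacobianDerivation f f = 0 := by
  rw [jacobianDerivation_apply, mul_comm, sub_self]

theorem jacobianDerivation_aeval_self (f : MvPolynomial (Fin 2) k) (s : k[X]) :
    jacobianDerivation f (Polynomial.aeval f s) = 0 := by
  rw [Derivation.map_aeval, jacobianDerivation_self, smul_zero]

theorem jacobianDerivation_aeval_mul_add_aeval (f g : MvPolynomial (Fin 2) k) (a b : k[X]) :
    jacobianDerivation f (Polynomial.aeval f a * g + Polynomial.aeval f b) =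
      Polynomial.aeval f a * jacobianDerivation f g := by
  rw [map_add, Derivation.leibniz, jacobianDerivation_aeval_self, jacobianDerivation_aeval_self,
    smul_zero, add_zero, add_zero, smul_eq_mul]

theorem jacobianDerivation_dvd_of_mem_adjoin {p q : MvPolynomial (Fin 2) k}
    (hp : p ∈ Algebra.adjoin k {f, g}) (hq : q ∈ Algebra.adjoin k {f, g}) :
    jacobianDerivation f g ∣ jacobianDerivation p q := by
  have hfp : jacobianDerivation f g ∣ jacobianDerivation f p := by
    refine dvd_derivation_of_mem_adjoin _ ?_ hp
    rintro x (rfl | rfl)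
    · simp [jacobianDerivation_self]
    · exact dvd_rfl
  have hgp : jacobianDerivation f g ∣ jacobianDerivation g p := by
    refine dvd_derivation_of_mem_adjoin _ ?_ hp
    rintro x (rfl | rfl)
    · rw [jacobianDerivation_swap x g, dvd_neg]
    · simp [jacobianDerivation_self]
  refine dvd_derivation_of_mem_adjoin _ ?_ hq
  rintro x (rfl | rfl)
  · rwa [jacobianDerivation_swap x p, dvd_neg]
  · rwa [jacobianDerivation_swap x p, dvd_neg]

theorem IsGenericGenerator.exists_jacobianDerivation_dvd [IsDomain k]
    (hg : IsGenericGenerator k f g) :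
    ∃ p : k[X], p ≠ 0 ∧ jacobianDerivation f g ∣ Polynomial.aeval f p := by
  obtain ⟨s, hs, hx⟩ := hg (X 0)
  obtain ⟨t, ht, hy⟩ := hg (X 1)
  refine ⟨s * t, mul_ne_zero hs ht, ?_⟩
  have hf : f ∈ Algebra.adjoin k {f, g} := mem_adjoin_pair_left f g
  have hfx : jacobianDerivation f g ∣ Polynomial.aeval f s * pderiv 1 f := by
    have := jacobianDerivation_dvd_of_mem_adjoin hf hx
    simpa [jacobianDerivation_self, jacobianDerivation_apply f (X 0)] using this
  have hfy : jacobianDerivation f g ∣ Polynomial.aeval f t * pderiv 0 f := by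
    have := jacobianDerivation_dvd_of_mem_adjoin hf hy
    simpa [jacobianDerivation_self, jacobianDerivation_apply f (X 1)] using this
  have hxy := jacobianDerivation_dvd_of_mem_adjoin hx hy
  have hexpand : jacobianDerivation (Polynomial.aeval f s * X 0) (Polynomial.aeval f t * X 1) =
      Polynomial.aeval f (s * t) +
      X 0 * Polynomial.aeval f s.derivative * (Polynomial.aeval f t * pderiv 0 f) +
      X 1 * Polynomial.aeval f t.derivative * (Polynomial.aeval f s * pderiv 1 f) := by
    simp [jacobianDerivation_apply, Derivation.map_aeval]
    ring
  rw [hexpand] at hxy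
  exact (dvd_add_left (dvd_mul_of_dvd_right hfy _)).mp
    ((dvd_add_left (dvd_mul_of_dvd_right hfx _)).mp hxy)

theorem isUnit_jacobianDerivation_of_adjoin_eq_top (h : Algebra.adjoin k {f, g} = ⊤) :
    IsUnit (jacobianDerivation f g) := by
  have hdvd : jacobianDerivation f g ∣ jacobianDerivation (X 0) (X 1) :=
    jacobianDerivation_dvd_of_mem_adjoin (h ▸ Algebra.mem_top) (h ▸ Algebra.mem_top)
  refine isUnit_of_dvd_one (hdvd.trans (dvd_of_eq ?_))
  simp [jacobianDerivation_apply]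

theorem jacobianDerivation_map {K : Type*} [CommRing K] (φ : k →+* K)
    (f g : MvPolynomial (Fin 2) k) :
    jacobianDerivation (map φ f) (map φ g) = map φ (jacobianDerivation f g) := by
  simp [jacobianDerivation_apply, pderiv_map]

theorem IsGenericGenerator.exists_aeval_eq_jacobianDerivation {k : Type*} [Field k]
    {f g : MvPolynomial (Fin 2) k} (hf : Transcendental k f) (hg : IsGenericGenerator k f g) :
    ∃ a : k[X], a ≠ 0 ∧ Polynomial.aeval f a = jacobianDerivation f g := by
  obtain ⟨p, hp, hdvd⟩ := hg.exists_jacobianDerivation_dvd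
  obtain ⟨a, ha⟩ := hg.exists_aeval_eq_of_dvd hf hp hdvd
  refine ⟨a, ?_, ha⟩
  rintro rfl
  rw [← ha, map_zero, zero_dvd_iff] at hdvd
  exact aeval_ne_zero_of_transcendental hf hp hdvd

end Jacobian

section IsAlgClosed

theorem dvd_aevalAeval_iff_of_dvd_sub {k A : Type*} [CommRing k] [CommRing A] [Algebra k A]
    {π f g : A} {l : k} (hf : π ∣ f - algebraMap k A l) (Q : k[X][Y]) :
    π ∣ Polynomial.aevalAeval f g Q ↔
      π ∣ Polynomial.aeval g (Q.map (Polynomial.evalRingHom l)) := by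
  have hfl : Ideal.Quotient.mkₐ k (Ideal.span {π}) f = algebraMap k (A ⧸ Ideal.span {π}) l :=
    Ideal.Quotient.eq.mpr (Ideal.mem_span_singleton.mpr hf)
  simp only [← Ideal.mem_span_singleton, ← Ideal.Quotient.eq_zero_iff_mem]
  have h := map_aevalAeval (Ideal.Quotient.mkₐ k (Ideal.span {π})) f g Q
  rw [hfl, aevalAeval_algebraMap, Polynomial.aeval_algHom_apply] at h
  exact Eq.congr_left h

variable {k : Type*} [Field k] [IsAlgClosed k]

theorem exists_associated_X_sub_C {p : k[X]} (hp : Irreducible p) :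
    ∃ l, Associated (Polynomial.X - Polynomial.C l) p := by
  obtain ⟨l, hl⟩ := IsAlgClosed.exists_root p hp.degree_pos.ne'
  exact ⟨l, (Polynomial.irreducible_X_sub_C l).associated_of_dvd hp
    (Polynomial.dvd_iff_isRoot.mpr hl)⟩

theorem exists_dvd_sub_algebraMap_of_dvd_aeval {A : Type*} [CommRing A] [Algebra k A] {π g : A}
    (hπ : Prime π) {q : k[X]} (hq : q ≠ 0) (h : π ∣ Polynomial.aeval g q) :
    ∃ m : k, π ∣ g - algebraMap k A m := by
  have : (Ideal.span {π}).IsPrime := (Ideal.span_singleton_prime hπ.ne_zero).mpr hπ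
  have hroot : (q.map (algebraMap k (A ⧸ Ideal.span {π}))).IsRoot
      (Ideal.Quotient.mkₐ k (Ideal.span {π}) g) := by
    rw [Polynomial.IsRoot, Polynomial.eval_map_algebraMap, Polynomial.aeval_algHom_apply]
    exact Ideal.Quotient.eq_zero_iff_mem.mpr (Ideal.mem_span_singleton.mpr h)
  obtain ⟨m, hm⟩ := (IsAlgClosed.splits q).mem_range_of_isRoot hq hroot
  exact ⟨m, Ideal.mem_span_singleton.mp (Ideal.Quotient.eq.mp hm.symm)⟩

variable {f g : MvPolynomial (Fin 2) k}

theorem IsGenericGenerator.exists_eq_aeval_mul_add_aeval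
    (hf : Transcendental k f) (hg : IsGenericGenerator k f g)
    (htop : Algebra.adjoin k {f, g} ≠ ⊤) :
    ∃ (p b : k[X]) (g' : MvPolynomial (Fin 2) k), Irreducible p ∧
      g = Polynomial.aeval f p * g' + Polynomial.aeval f b := by
  obtain ⟨p, Q, hp, hdvd, hndvd⟩ : ∃ (p : k[X]) (Q : k[X][Y]), Irreducible p ∧
      Polynomial.aeval f p ∣ Polynomial.aevalAeval f g Q ∧ ¬ Polynomial.C p ∣ Q := by
    by_contra! h
    exact htop (hg.adjoin_eq_top_of_forall_irreducible hf h)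
  obtain ⟨l, hl⟩ := exists_associated_X_sub_C hp
  have hfl : Polynomial.aeval f p ∣ f - algebraMap k _ l := by
    simpa using map_dvd (Polynomial.aeval f) hl.symm.dvd
  have hQ : Q.map (Polynomial.evalRingHom l) ≠ 0 := fun h =>
    hndvd ((map_dvd Polynomial.C hl.symm.dvd).trans (C_X_sub_C_dvd_of_map_evalRingHom_eq_zero h))
  obtain ⟨m, g', hg'⟩ := exists_dvd_sub_algebraMap_of_dvd_aeval (hg.prime_aeval hf hp) hQ
    ((dvd_aevalAeval_iff_of_dvd_sub hfl Q).mp hdvd)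
  exact ⟨p, Polynomial.C m, g', hp, by rw [← hg', Polynomial.aeval_C, sub_add_cancel]⟩

theorem IsGenericGenerator.adjoin_eq_top_of_isUnit_of_isAlgClosed
    (hf : Transcendental k f) (hg : IsGenericGenerator k f g)
    (hunit : IsUnit (jacobianDerivation f g)) : Algebra.adjoin k {f, g} = ⊤ := by
  by_contra htop
  obtain ⟨p, b, g', hp, rfl⟩ := hg.exists_eq_aeval_mul_add_aeval hf htop
  rw [jacobianDerivation_aeval_mul_add_aeval] at hunit
  exact (hg.prime_aeval hf hp).not_isUnit (isUnit_of_mul_isUnit_left hunit)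

theorem IsGenericGenerator.exists_eq_jacobianDerivation_mul_add_of_isAlgClosed
    (hf : Transcendental k f) (hg : IsGenericGenerator k f g) :
    ∃ (h : MvPolynomial (Fin 2) k) (b : k[X]),
      g = jacobianDerivation f g * h + Polynomial.aeval f b := by
  induction hJ : jacobianDerivation f g
    using (wellFounded_dvdNotUnit (α := MvPolynomial (Fin 2) k)).induction generalizing g with
  | _ J ih =>
  subst hJ
  by_cases htop : Algebra.adjoin k {f, g} = ⊤
  · obtain ⟨v, hv⟩ := (isUnit_jacobianDerivation_of_adjoin_eq_top htop).exists_right_inv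
    exact ⟨v * g, 0, by rw [← mul_assoc, hv, one_mul, map_zero, add_zero]⟩
  obtain ⟨p, b, g', hp, hgg'⟩ := hg.exists_eq_aeval_mul_add_aeval hf htop
  have hg' : IsGenericGenerator k f g' := hg.of_eq_aeval_mul_add_aeval hgg'
  have hJ : jacobianDerivation f g = Polynomial.aeval f p * jacobianDerivation f g' := by
    rw [hgg', jacobianDerivation_aeval_mul_add_aeval]
  have hlt : DvdNotUnit (jacobianDerivation f g') (jacobianDerivation f g) := by
    obtain ⟨a, ha, hJ'⟩ := hg'.exists_aeval_eq_jacobianDerivation hf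
    exact ⟨hJ' ▸ aeval_ne_zero_of_transcendental hf ha, _, (hg.prime_aeval hf hp).not_isUnit,
      by rw [hJ, mul_comm]⟩
  obtain ⟨h, c, hh⟩ := ih _ hlt hg' rfl
  refine ⟨h, p * c + b, ?_⟩
  rw [hJ, map_add, map_mul]
  linear_combination hgg' + Polynomial.aeval f p * hh

end IsAlgClosed

section BaseChange

variable {k A K B : Type*} [CommRing k] [CommRing A] [CommRing K] [CommRing B]
  [Algebra k A] [Algebra k K] [Algebra k B] [Algebra A B] [Algebra K B]
  [IsScalarTower k A B] [IsScalarTower k K B]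

theorem algebraMap_mem_adjoin_image {S : Set A} {x : A} (hx : x ∈ Algebra.adjoin k S) :
    algebraMap A B x ∈ Algebra.adjoin K (algebraMap A B '' S) := by
  have hle : Algebra.adjoin k S ≤ ((Algebra.adjoin K (algebraMap A B '' S)).restrictScalars
      k).comap (IsScalarTower.toAlgHom k A B) :=
    Algebra.adjoin_le fun y hy => Algebra.subset_adjoin (Set.mem_image_of_mem _ hy)
  exact hle hx

variable (k A K B) in
theorem adjoin_range_algebraMap_eq_top [Algebra.IsPushout k A K B] :
    Algebra.adjoin K (Set.range (algebraMap A B)) = ⊤ := by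
  refine Algebra.eq_top_iff.mpr fun x => ?_
  induction x using (Algebra.IsPushout.symm ‹_› : Algebra.IsPushout k K A B).out.inductionOn with
  | zero => exact zero_mem _
  | tmul a => exact Algebra.subset_adjoin (Set.mem_range_self a)
  | smul c x hx => exact Subalgebra.smul_mem _ hx c
  | add x y hx hy => exact add_mem hx hy

theorem IsGenericGenerator.baseChange [IsDomain K] [FaithfulSMul k K]
    [Algebra.IsPushout k A K B] {f g : A} (hg : IsGenericGenerator k f g) :
    IsGenericGenerator K (algebraMap A B f) (algebraMap A B g) := by
  refine isGenericGenerator_of_adjoin_eq_top (adjoin_range_algebraMap_eq_top k A K B) ?_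
  rintro _ ⟨x, rfl⟩
  obtain ⟨s, hs, hx⟩ := hg x
  refine ⟨s.map (algebraMap k K),
    (Polynomial.map_ne_zero_iff (FaithfulSMul.algebraMap_injective k K)).mpr hs, ?_⟩
  rw [Polynomial.aeval_map_algebraMap, Polynomial.aeval_algebraMap_apply, ← map_mul,
    ← Set.image_pair]
  exact algebraMap_mem_adjoin_image hx

theorem transcendental_algebraMap_of_isAlgebraic [NoZeroDivisors K] [FaithfulSMul A B]
    [Algebra.IsAlgebraic k K] {f : A} (hf : Transcendental k f) :
    Transcendental K (algebraMap A B f) := fun h =>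
  (transcendental_algebraMap_iff (FaithfulSMul.algebraMap_injective A B)).mpr hf
    (h.restrictScalars k)

theorem retraction_mem_adjoin {k A K B : Type*} [CommRing k] [CommRing A] [CommRing K]
    [CommRing B] [Algebra k A] [Algebra A B] [Algebra K B] {ψ : B →ₗ[A] A}
    (hψ : ∀ c, ψ (algebraMap K B c) ∈ (⊥ : Subalgebra k A)) {S : Set A} {q : B}
    (hq : q ∈ Algebra.adjoin K (algebraMap A B '' S)) : ψ q ∈ Algebra.adjoin k S := by
  rw [← Subalgebra.mem_toSubmodule, Algebra.adjoin_eq_span] at hq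
  induction hq using Submodule.closure_induction with
  | zero => rw [map_zero]; exact zero_mem _
  | add x y _ _ hx hy => rw [map_add]; exact add_mem hx hy
  | smul_mem c x hx =>
    obtain ⟨m, hm, rfl⟩ : x ∈ (Submonoid.closure S).map (algebraMap A B) := by
      rwa [MonoidHom.map_mclosure]
    have hmS : m ∈ Algebra.adjoin k S :=
      Submonoid.closure_le (S := (Algebra.adjoin k S).toSubmonoid).mpr Algebra.subset_adjoin hm
    have hsmul : c • algebraMap A B m = m • algebraMap K B c := by
      rw [Algebra.smul_def, Algebra.smul_def, mul_comm]
    rw [hsmul, map_smul, smul_eq_mul]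
    exact mul_mem hmS (bot_le (a := Algebra.adjoin k S) (hψ c))

theorem exists_retraction_of_isPushout (k A K B : Type*) [Field k] [CommRing A] [CommRing K]
    [CommRing B] [Algebra k A] [Algebra k K] [Algebra k B] [Algebra A B] [Algebra K B]
    [IsScalarTower k A B] [IsScalarTower k K B] [Nontrivial K] [Algebra.IsPushout k A K B] :
    ∃ ψ : B →ₗ[A] A, (∀ x, ψ (algebraMap A B x) = x) ∧
      ∀ c, ψ (algebraMap K B c) ∈ (⊥ : Subalgebra k A) := by
  obtain ⟨π, hπ⟩ := LinearMap.exists_leftInverse_of_injective (Algebra.linearMap k K)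
    (LinearMap.ker_eq_bot.mpr (FaithfulSMul.algebraMap_injective k K))
  have hbase : IsBaseChange A (IsScalarTower.toAlgHom k K B).toLinearMap := Algebra.IsPushout.out
  let ψ : B →ₗ[A] A := hbase.lift (Algebra.linearMap k A ∘ₗ π)
  have hψ (c : K) : ψ (algebraMap K B c) = algebraMap k A (π c) := hbase.lift_eq _ c
  have hπ_one : π 1 = 1 := by simpa using LinearMap.congr_fun hπ 1
  refine ⟨ψ, fun x => ?_, fun c => Algebra.mem_bot.mpr ⟨_, (hψ c).symm⟩⟩
  rw [Algebra.algebraMap_eq_smul_one, map_smul, ← map_one (algebraMap K B), hψ, hπ_one, map_one,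
    smul_eq_mul, mul_one]

end BaseChange

section Descent

attribute [local instance] MvPolynomial.algebraMvPolynomial

variable {k : Type*} [Field k] {f g : MvPolynomial (Fin 2) k}

theorem IsGenericGenerator.exists_eq_jacobianDerivation_mul_add
    (hf : Transcendental k f) (hg : IsGenericGenerator k f g) :
    ∃ (h : MvPolynomial (Fin 2) k) (b : k[X]),
      g = jacobianDerivation f g * h + Polynomial.aeval f b := by
  let K := AlgebraicClosure k
  let ι := algebraMap (MvPolynomial (Fin 2) k) (MvPolynomial (Fin 2) K)
  have hfK : Transcendental K (ι f) := transcendental_algebraMap_of_isAlgebraic hf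
  obtain ⟨h, b, hgh⟩ := (hg.baseChange (K := K)
    (B := MvPolynomial (Fin 2) K)).exists_eq_jacobianDerivation_mul_add_of_isAlgClosed hfK
  obtain ⟨ψ, hψι, hψ⟩ := exists_retraction_of_isPushout k (MvPolynomial (Fin 2) k) K
    (MvPolynomial (Fin 2) K)
  have hb : ψ (Polynomial.aeval (ι f) b) ∈ Algebra.adjoin k {f} := by
    refine retraction_mem_adjoin hψ ?_
    rw [Set.image_singleton]
    exact Polynomial.aeval_mem_adjoin_singleton K (ι f)
  rw [Algebra.adjoin_singleton_eq_range_aeval] at hb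
  obtain ⟨c, hc : Polynomial.aeval f c = _⟩ := hb
  refine ⟨ψ h, c, ?_⟩
  have hJ : jacobianDerivation (ι f) (ι g) * h = jacobianDerivation f g • h := by
    rw [Algebra.smul_def]
    exact congrArg (· * h) (jacobianDerivation_map (algebraMap k K) f g)
  calc g = ψ (ι g) := (hψι g).symm
    _ = ψ (jacobianDerivation f g • h + Polynomial.aeval (ι f) b) := by rw [← hJ, ← hgh]
    _ = jacobianDerivation f g * ψ h + Polynomial.aeval f c := by
      rw [map_add, map_smul, smul_eq_mul, hc]

theorem IsGenericGenerator.adjoin_eq_top_of_isUnit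
    (hf : Transcendental k f) (hg : IsGenericGenerator k f g)
    (hunit : IsUnit (jacobianDerivation f g)) : Algebra.adjoin k {f, g} = ⊤ := by
  let K := AlgebraicClosure k
  let ι := algebraMap (MvPolynomial (Fin 2) k) (MvPolynomial (Fin 2) K)
  have hunitK : IsUnit (jacobianDerivation (ι f) (ι g)) :=
    jacobianDerivation_map (algebraMap k K) f g ▸ hunit.map ι
  have htop : Algebra.adjoin K {ι f, ι g} = ⊤ :=
    hg.baseChange.adjoin_eq_top_of_isUnit_of_isAlgClosed
      (transcendental_algebraMap_of_isAlgebraic hf) hunitK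
  obtain ⟨ψ, hψι, hψ⟩ := exists_retraction_of_isPushout k (MvPolynomial (Fin 2) k) K
    (MvPolynomial (Fin 2) K)
  refine Algebra.eq_top_iff.mpr fun x => hψι x ▸ retraction_mem_adjoin hψ ?_
  rw [Set.image_pair, htop]
  exact Algebra.mem_top

theorem IsGenericGenerator.exists_adjoin_eq_top
    (hf : Transcendental k f) (hg : IsGenericGenerator k f g) :
    ∃ h, Algebra.adjoin k {f, h} = ⊤ := by
  obtain ⟨h, b, hgh⟩ := hg.exists_eq_jacobianDerivation_mul_add hf
  obtain ⟨a, ha, haJ⟩ := hg.exists_aeval_eq_jacobianDerivation hf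
  rw [← haJ] at hgh
  have hJ : jacobianDerivation f h = 1 := by
    have hJg : jacobianDerivation f g = Polynomial.aeval f a * jacobianDerivation f h := by
      conv_lhs => rw [hgh, jacobianDerivation_aeval_mul_add_aeval]
    rw [← haJ] at hJg
    exact (mul_eq_left₀ (aeval_ne_zero_of_transcendental hf ha)).mp hJg.symm
  exact ⟨h, (hg.of_eq_aeval_mul_add_aeval hgh).adjoin_eq_top_of_isUnit hf (hJ ▸ isUnit_one)⟩

end Descent

theorem exists_algEquiv_of_adjoin_eq_top {k : Type*} [Field k] {f h : MvPolynomial (Fin 2) k}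
    (hf : Transcendental k f) (htop : Algebra.adjoin k {f, h} = ⊤) :
    ∃ φ : MvPolynomial (Fin 2) k ≃ₐ[k] MvPolynomial (Fin 2) k, φ f = X 0 := by
  have hh : IsGenericGenerator k f h := fun _ => ⟨1, one_ne_zero, htop ▸ Algebra.mem_top⟩
  have hsurj : Function.Surjective (Polynomial.aevalAeval (R := k) f h) := by
    rw [← AlgHom.range_eq_top, range_aevalAeval, htop]
  let e := AlgEquiv.ofBijective _ ⟨hh.aevalAeval_injective hf, hsurj⟩
  have he : e.symm f = Polynomial.C Polynomial.X :=
    (AlgEquiv.symm_apply_eq e).mpr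
      ((Polynomial.aevalAeval_C f h Polynomial.X).trans (Polynomial.aeval_X f)).symm
  exact ⟨e.symm.trans (Polynomial.Bivariate.equivMvPolynomial k), by simp [he]⟩

theorem eq_top_of_adjoin_eq_top {k R B : Type*} [CommRing k] [CommRing R] [CommRing B] [Algebra k B]
    [Algebra R B] {S : Subalgebra k B} {G : Set B} (hG : Algebra.adjoin R G = ⊤)
    (hR : ∀ r : R, algebraMap R B r ∈ S) (hGS : G ⊆ S) : S = ⊤ := by
  let S' : Subalgebra R B := { S with algebraMap_mem' := hR }
  have hS' : S' = ⊤ := top_le_iff.mp (hG ▸ Algebra.adjoin_le hGS)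
  exact eq_top_iff.mpr fun x _ => (hS' ▸ Algebra.mem_top : x ∈ S')

theorem adjoin_symm_X_eq_top {R B : Type*} [CommSemiring R] [Semiring B] [Algebra R B]
    (e : B ≃ₐ[R] R[X]) : Algebra.adjoin R {e.symm Polynomial.X} = ⊤ := by
  have hX := e.symm.toAlgHom.map_adjoin {Polynomial.X}
  rw [Polynomial.adjoin_X, Algebra.map_top, Set.image_singleton] at hX
  exact hX.symm.trans ((AlgHom.range_eq_top _).mpr e.symm.surjective)

section Fibre

variable {σ k R : Type*} [CommRing k] [CommRing R] [Algebra k R]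

/-- The `R`-algebra `R[σ]/(P - t)`, the fibre of `P` over the point `t` with values in `R`. -/
abbrev Fibre (P : MvPolynomial σ k) (t : R) : Type _ :=
  MvPolynomial σ R ⧸ Ideal.span {map (algebraMap k R) P - C t}

namespace Fibre

variable {P : MvPolynomial σ k} {t : R}

variable (P t) in
/-- The restriction homomorphism `k[σ] → R[σ]/(P - t)`. -/
def of : MvPolynomial σ k →ₐ[k] Fibre P t :=
  (Ideal.Quotient.mkₐ k _).comp (mapAlgHom (Algebra.ofId k R))

variable (P t) in
theorem of_self : of P t P = algebraMap R (Fibre P t) t :=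
  Ideal.Quotient.eq.mpr (Ideal.subset_span rfl)

theorem adjoin_range_of : Algebra.adjoin R (Set.range (of P t)) = ⊤ := by
  have hX : Set.range (Ideal.Quotient.mk _ ∘ X) ⊆ Set.range (of P t) := by
    rintro _ ⟨i, rfl⟩
    exact ⟨X i, congrArg (Ideal.Quotient.mk _) (map_X _ i)⟩
  refine eq_top_iff.mpr (le_trans ?_ (Algebra.adjoin_mono hX))
  rw [Set.range_comp, ← Ideal.Quotient.mkₐ_eq_mk R, ← AlgHom.map_adjoin, adjoin_range_X,
    Algebra.map_top, (AlgHom.range_eq_top _).mpr (Ideal.Quotient.mkₐ_surjective R _)]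

theorem algHom_ext {L : Type*} [CommRing L] [Algebra R L] {φ ψ : Fibre P t →ₐ[R] L}
    (h : ∀ p, φ (of P t p) = ψ (of P t p)) : φ = ψ :=
  AlgHom.ext_of_adjoin_eq_top adjoin_range_of <| by
    rintro _ ⟨p, rfl⟩
    exact h p

variable {L : Type*} [CommRing L] [Algebra k L] [Algebra R L] [IsScalarTower k R L]

/-- The `R`-algebra homomorphism out of a fibre induced by a `k`-algebra homomorphism `φ` out of
`k[σ]` that sends `P` to `t`. -/
def lift (φ : MvPolynomial σ k →ₐ[k] L) (h : φ P = algebraMap R L t) : Fibre P t →ₐ[R] L :=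
  Ideal.Quotient.liftₐ _ (aeval fun i => φ (X i)) <| by
    have hφ : aeval (fun i => φ (X i)) (map (algebraMap k R) P) = φ P := by
      rw [aeval_map_algebraMap]
      exact DFunLike.congr_fun (aeval_unique φ).symm P
    change Ideal.span _ ≤ RingHom.ker _
    rw [Ideal.span_singleton_le_iff_mem, RingHom.mem_ker, map_sub, ← algebraMap_eq,
      AlgHom.commutes, sub_eq_zero]
    exact hφ.trans h

@[simp]
theorem lift_of (φ : MvPolynomial σ k →ₐ[k] L) (h : φ P = algebraMap R L t)
    (p : MvPolynomial σ k) : lift φ h (of P t p) = φ p :=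
  (aeval_map_algebraMap R _ p).trans (DFunLike.congr_fun (aeval_unique φ) p).symm

/-- For a variable `P`, carried to `X 0` by `φ`, every fibre of `P` is the polynomial ring in the
restriction of the complementary variable `φ.symm (X 1)`. -/
def equivPolynomial {P : MvPolynomial (Fin 2) k} (t : R)
    (φ : MvPolynomial (Fin 2) k ≃ₐ[k] MvPolynomial (Fin 2) k) (hφ : φ P = X 0) :
    Fibre P t ≃ₐ[R] R[X] :=
  let ψ : MvPolynomial (Fin 2) k →ₐ[k] R[X] := aeval ![Polynomial.C t, Polynomial.X]
  let ι : R[X] →ₐ[R] Fibre P t := Polynomial.aeval (of P t (φ.symm (X 1)))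
  have hι : (ι.restrictScalars k).comp ψ = (of P t).comp φ.symm.toAlgHom := by
    have hφ' : φ.symm (X 0) = P := by rw [← hφ, AlgEquiv.symm_apply_apply]
    ext i
    fin_cases i
    · simpa [ψ, hφ', of_self] using ι.commutes t
    · simp [ψ, ι]
  AlgEquiv.ofAlgHom (lift (ψ.comp φ.toAlgHom) (by simp [ψ, hφ])) ι
    (Polynomial.algHom_ext (by simp [ι, ψ]))
    (algHom_ext fun p => by simpa using DFunLike.congr_fun hι (φ p))

end Fibre

end Fibre

section PolynomialBase

variable {σ k : Type*} [CommRing k]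

theorem Fibre.of_X_bijective (P : MvPolynomial σ k) :
    Function.Bijective (Fibre.of P (Polynomial.X : k[X])) := by
  constructor
  · let : Algebra k[X] (MvPolynomial σ k) := (Polynomial.aeval P).toAlgebra
    have : IsScalarTower k k[X] (MvPolynomial σ k) :=
      .of_algebraMap_eq' (Polynomial.aeval P).comp_algebraMap.symm
    have hP : AlgHom.id k _ P = algebraMap k[X] (MvPolynomial σ k) Polynomial.X :=
      (Polynomial.aeval_X P).symm
    exact Function.LeftInverse.injective (Fibre.lift_of _ hP)
  · rw [← AlgHom.range_eq_top]
    refine eq_top_of_adjoin_eq_top Fibre.adjoin_range_of (fun s => ?_) subset_rfl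
    refine ⟨Polynomial.aeval P s, ?_⟩
    change Fibre.of P _ _ = _
    rw [← Polynomial.aeval_algHom_apply, Fibre.of_self, Polynomial.aeval_algebraMap_apply,
      Polynomial.aeval_X_left_apply]

theorem exists_algEquiv_of_fibre_X_equiv {P : MvPolynomial (Fin 2) k}
    (e : Fibre P (Polynomial.X : k[X]) ≃ₐ[k[X]] k[X][Y]) :
    ∃ φ : MvPolynomial (Fin 2) k ≃ₐ[k] MvPolynomial (Fin 2) k, φ P = X 0 :=
  ⟨((AlgEquiv.ofBijective _ (Fibre.of_X_bijective P)).trans (e.restrictScalars k)).trans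
    (Polynomial.Bivariate.equivMvPolynomial k), by simp [Fibre.of_self]⟩

end PolynomialBase

section FractionField

theorem aeval_algebraMap_algebraMap_X (k K B : Type*) [CommRing k] [CommRing K] [CommRing B]
    [Algebra k K] [Algebra k[X] K] [IsScalarTower k k[X] K] [Algebra k B] [Algebra K B]
    [IsScalarTower k K B] (s : k[X]) :
    Polynomial.aeval (algebraMap K B (algebraMap k[X] K Polynomial.X)) s =
      algebraMap K B (algebraMap k[X] K s) := by
  rw [Polynomial.aeval_algebraMap_apply, Polynomial.aeval_algebraMap_apply,
    Polynomial.aeval_X_left_apply]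

variable {k K : Type*} [Field k] [Field K] [Algebra k[X] K] [IsFractionRing k[X] K] [Algebra k K]
  [IsScalarTower k k[X] K]

theorem exists_aeval_mul_mem_of_adjoin_eq_top {B : Type*} [CommRing B] [Algebra k B]
    [Algebra K B] [IsScalarTower k K B] {f : B}
    (hf : f = algebraMap K B (algebraMap k[X] K Polynomial.X)) {S : Subalgebra k B} (hfS : f ∈ S)
    {G : Set B} (hG : Algebra.adjoin K G = ⊤)
    (h : ∀ x ∈ G, ∃ s : k[X], s ≠ 0 ∧ Polynomial.aeval f s * x ∈ S) (x : B) :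
    ∃ s : k[X], s ≠ 0 ∧ Polynomial.aeval f s * x ∈ S := by
  suffices htop : polynomialSaturation f S hfS = ⊤ from
    mem_polynomialSaturation.mp (htop ▸ Algebra.mem_top)
  refine eq_top_of_adjoin_eq_top hG (fun r => ?_) fun x hx => mem_polynomialSaturation.mpr (h x hx)
  obtain ⟨a, s, hs, rfl⟩ := IsFractionRing.div_surjective k[X] r
  refine mem_polynomialSaturation.mpr ⟨s, nonZeroDivisors.ne_zero hs, ?_⟩
  have hsa : Polynomial.aeval f s * algebraMap K B (algebraMap k[X] K a / algebraMap k[X] K s) =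
      Polynomial.aeval f a := by
    rw [hf, aeval_algebraMap_algebraMap_X, ← map_mul, aeval_algebraMap_algebraMap_X,
      mul_div_cancel₀ _ (IsFractionRing.to_map_ne_zero_of_mem_nonZeroDivisors hs)]
  exact hsa ▸ aeval_mem_of_mem hfS a

variable {σ : Type*} {P : MvPolynomial σ k}

theorem transcendental_of_nontrivial_fibre
    [Nontrivial (Fibre P (algebraMap k[X] K Polynomial.X))] : Transcendental k P := by
  refine transcendental_iff.mpr fun s hs => ?_
  have h := congrArg (Fibre.of P (algebraMap k[X] K Polynomial.X)) hs
  rw [← Polynomial.aeval_algHom_apply, Fibre.of_self, aeval_algebraMap_algebraMap_X, map_zero,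
    map_eq_zero] at h
  exact (FaithfulSMul.algebraMap_eq_zero_iff k[X] K).mp h

theorem Fibre.of_injective_of_transcendental (hP : Transcendental k P) :
    Function.Injective (Fibre.of P (algebraMap k[X] K Polynomial.X)) := by
  let L := FractionRing (MvPolynomial σ k)
  let ι := IsScalarTower.toAlgHom k (MvPolynomial σ k) L
  have hι : Function.Injective ι := IsFractionRing.injective (MvPolynomial σ k) L
  have hinj : Function.Injective (ι.comp (Polynomial.aeval P)) :=
    hι.comp (transcendental_iff_injective.mp hP)
  let ρ : K →ₐ[k] L := IsFractionRing.liftAlgHom hinj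
  let : Algebra K L := ρ.toAlgebra
  have : IsScalarTower k K L := .of_algebraMap_eq' ρ.comp_algebraMap.symm
  have hιP : ι P = algebraMap K L (algebraMap k[X] K Polynomial.X) := by
    refine Eq.symm ((IsFractionRing.lift_algebraMap hinj _).trans ?_)
    exact congrArg ι (Polynomial.aeval_X P)
  exact Function.Injective.of_comp (f := Fibre.lift ι hιP) fun p q h => hι (by simpa using h)

theorem Fibre.exists_isGenericGenerator (hP : Transcendental k P)
    {z : Fibre P (algebraMap k[X] K Polynomial.X)} (hz : Algebra.adjoin K {z} = ⊤) :
    ∃ g, IsGenericGenerator k P g := by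
  let ι := Fibre.of P (algebraMap k[X] K Polynomial.X)
  have hιP : ι P = algebraMap K _ (algebraMap k[X] K Polynomial.X) := Fibre.of_self P _
  have hι (x : MvPolynomial σ k) : ∃ s : k[X], s ≠ 0 ∧ Polynomial.aeval (ι P) s * ι x ∈ ι.range :=
    ⟨1, one_ne_zero, by rw [map_one, one_mul]; exact ⟨x, rfl⟩⟩
  obtain ⟨s, hs, g, hg : ι g = _⟩ :=
    exists_aeval_mul_mem_of_adjoin_eq_top hιP (S := ι.range) ⟨P, rfl⟩ Fibre.adjoin_range_of
      (Set.forall_mem_range.mpr hι) z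
  have hgz : Polynomial.aeval (ι P) s * z ∈ Algebra.adjoin k {ι P, ι g} :=
    hg ▸ mem_adjoin_pair_right (ι P) (ι g)
  refine ⟨g, fun x => ?_⟩
  obtain ⟨q, hq, hx⟩ := exists_aeval_mul_mem_of_adjoin_eq_top hιP
    (mem_adjoin_pair_left (ι P) (ι g)) hz (by rintro _ rfl; exact ⟨s, hs, hgz⟩) (ι x)
  refine ⟨q, hq, ?_⟩
  rw [Polynomial.aeval_algHom_apply, ← map_mul, ← Set.image_pair, ← AlgHom.map_adjoin] at hx
  exact (Fibre.of_injective_of_transcendental hP).mem_set_image.mp hx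

theorem exists_algEquiv_of_generic_fibre_equiv {P : MvPolynomial (Fin 2) k}
    (e : Fibre P (algebraMap k[X] K Polynomial.X) ≃ₐ[K] K[X]) :
    ∃ φ : MvPolynomial (Fin 2) k ≃ₐ[k] MvPolynomial (Fin 2) k, φ P = X 0 := by
  have := e.toEquiv.nontrivial
  have hP : Transcendental k P := transcendental_of_nontrivial_fibre (K := K)
  obtain ⟨g, hg⟩ := Fibre.exists_isGenericGenerator hP (adjoin_symm_X_eq_top e)
  obtain ⟨h, hh⟩ := hg.exists_adjoin_eq_top hP
  exact exists_algEquiv_of_adjoin_eq_top hP hh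

end FractionField

/-- **Lemma 3.9 (parts (1)–(3)) (Blanc–van Santen).** For `P ∈ k[x,y]`, the following are
equivalent: (1) `P` is a variable of `k[x,y]`; (2) the `k[t]`-algebra `k[t][x,y]/(P − t)` is
a polynomial ring in one variable over `k[t]`; (3) the `k(t)`-algebra `k(t)[x,y]/(P − t)` is
a polynomial ring in one variable over `k(t)`. -/
theorem variable_iff_generic_fibre_polynomial_ring
    (k : Type*) [Field k] (P : MvPolynomial (Fin 2) k) :
    ((∃ f : MvPolynomial (Fin 2) k ≃ₐ[k] MvPolynomial (Fin 2) k, f P = X 0) ↔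
      Nonempty ((MvPolynomial (Fin 2) (Polynomial k) ⧸
          Ideal.span {MvPolynomial.map (Polynomial.C : k →+* Polynomial k) P -
            MvPolynomial.C Polynomial.X}) ≃ₐ[Polynomial k] Polynomial (Polynomial k))) ∧
    ((∃ f : MvPolynomial (Fin 2) k ≃ₐ[k] MvPolynomial (Fin 2) k, f P = X 0) ↔
      Nonempty ((MvPolynomial (Fin 2) (RatFunc k) ⧸
          Ideal.span {MvPolynomial.map
              ((algebraMap (Polynomial k) (RatFunc k)).comp (Polynomial.C : k →+* Polynomial k)) P -
            MvPolynomial.C (algebraMap (Polynomial k) (RatFunc k) Polynomial.X)})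
          ≃ₐ[RatFunc k] Polynomial (RatFunc k))) := by
  rw [← Polynomial.algebraMap_eq, ← IsScalarTower.algebraMap_eq k (Polynomial k) (RatFunc k)]
  exact ⟨⟨fun ⟨φ, hφ⟩ => ⟨Fibre.equivPolynomial _ φ hφ⟩,
      fun ⟨e⟩ => exists_algEquiv_of_fibre_X_equiv e⟩,
    ⟨fun ⟨φ, hφ⟩ => ⟨Fibre.equivPolynomial _ φ hφ⟩,
      fun ⟨e⟩ => exists_algEquiv_of_generic_fibre_equiv e⟩⟩
end
end

section
/- Let k be a field of characteristic p > 0, let a ∈ k, b ∈ k*, and let q ≥ 0 be an integer. Then the k-subalgebra of k[u] generated by u^{p²} and (1/b)(a·u^{pq} + u) equals k[u] (so the morphism 𝔸¹ → 𝔸², u ↦ (u^{p²}, (1/b)(a·u^{pq} + u)), is a closed embedding), and the kernel of the k-algebra homomorphism k[x,y] → k[u] given by x ↦ u^{p²}, y ↦ (1/b)(a·u^{pq} + u) is the principal ideal generated by x + a^{p²}·x^{pq} − b^{p²}·y^{p²} (so the image of the embedding is the closed curve in 𝔸² defined by this polynomial). -/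
open MvPolynomial

noncomputable section

/-! The curve `x + a^{p²} x^{pq} = b^{p²} y^{p²}` is parametrized by the line because the parameter
can be recovered polynomially. If `x = u^{p²}` and `b y = a u^{pq} + u`, then additivity of
Frobenius gives `u^p = b^p y^p - a^p x^q`, and `u = b y - a (u^p)^q`. Substituting the first formula
into the second defines a polynomial `U(x, y)`. Conversely, for arbitrary `x` and `y`, the
relations `U^{p²} = x` and `a U^{pq} + U = b y` hold modulo the equation of the curve, so
`u ↦ U(x, y)` inverts the parametrization on the coordinate ring. -/

theorem ker_aeval_eq_of_sub_X_mem {σ R B : Type*} [CommRing R] [CommSemiring B] [Algebra R B]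
    {v : σ → B} {I : Ideal (MvPolynomial σ R)} (hI : I ≤ RingHom.ker (aeval v : _ →ₐ[R] B))
    (ψ : B →ₐ[R] MvPolynomial σ R) (hψ : ∀ i, ψ (v i) - X i ∈ I) :
    RingHom.ker (aeval v : _ →ₐ[R] B) = I := by
  refine le_antisymm (fun g hg ↦ ?_) hI
  have hcomp : ((Ideal.Quotient.mkₐ R I).comp ψ).comp (aeval v) = Ideal.Quotient.mkₐ R I :=
    algHom_ext fun i ↦ by simpa using Ideal.Quotient.eq.mpr (hψ i)
  have hg' := DFunLike.congr_fun hcomp g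
  rw [AlgHom.comp_apply, RingHom.mem_ker.mp hg, map_zero] at hg'
  exact Ideal.Quotient.eq_zero_iff_mem.mp hg'.symm

theorem adjoin_eq_top_of_X_mem {R : Type*} [CommSemiring R] {s : Set (Polynomial R)}
    (hs : Polynomial.X ∈ Algebra.adjoin R s) : Algebra.adjoin R s = ⊤ :=
  top_le_iff.mp <| Polynomial.adjoin_X.ge.trans <|
    Algebra.adjoin_le <| Set.singleton_subset_iff.mpr hs

namespace LineInPlane

section Parameter

variable {A : Type*} [CommRing A] (p q : ℕ) (a b x y : A)

/-- The polynomial defining the curve, evaluated at the point `(x, y)` of `A²`. The coefficients lie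
in `A` as well, so that the definition covers both the polynomial itself (with `A` the polynomial
ring and `x`, `y` its variables) and its values. -/
def equation : A := x + a ^ p ^ 2 * x ^ (p * q) - b ^ p ^ 2 * y ^ p ^ 2

/-- The `p`-th power of the parameter of the point `(x, y)` of the curve, as a polynomial in the
coordinates. -/
def frobeniusParameter : A := b ^ p * y ^ p - a ^ p * x ^ q

/-- The parameter of the point `(x, y)` of the curve, as a polynomial in the coordinates; it is
defined for every point of the plane. -/
def parameter : A := b * y - a * frobeniusParameter p q a b x y ^ q

theorem parameter_mem {R : Type*} [CommRing R] [Algebra R A] (a b : R) {S : Subalgebra R A}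
    {x y : A} (hx : x ∈ S) (hy : y ∈ S) :
    parameter p q (algebraMap R A a) (algebraMap R A b) x y ∈ S := by
  have hmap := S.algebraMap_mem
  exact sub_mem (mul_mem (hmap b) hy) <| mul_mem (hmap a) <| pow_mem (sub_mem
    (mul_mem (pow_mem (hmap b) p) (pow_mem hy p)) (mul_mem (pow_mem (hmap a) p) (pow_mem hx q))) q

variable [ExpChar A p]

theorem frobeniusParameter_pow :
    frobeniusParameter p q a b x y ^ p = x - equation p q a b x y := by
  simp only [frobeniusParameter, equation, sub_pow_expChar, mul_pow]
  ring

theorem parameter_pow :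
    parameter p q a b x y ^ p = b ^ p * y ^ p - a ^ p * (x - equation p q a b x y) ^ q := by
  rw [parameter, sub_pow_expChar, mul_pow, mul_pow, pow_right_comm, frobeniusParameter_pow]

theorem equation_dvd_parameter_pow_sub :
    equation p q a b x y ∣ parameter p q a b x y ^ p - frobeniusParameter p q a b x y := by
  have hdvd := sub_dvd_pow_sub_pow x (x - equation p q a b x y) q
  rw [sub_sub_cancel] at hdvd
  rw [parameter_pow, frobeniusParameter, sub_sub_sub_cancel_left, ← mul_sub]
  exact hdvd.mul_left _

theorem equation_dvd_parameter_pow_sq_sub :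
    equation p q a b x y ∣ parameter p q a b x y ^ p ^ 2 - x := by
  have hdvd := (equation_dvd_parameter_pow_sub p q a b x y).trans (sub_dvd_pow_sub_pow _ _ p)
  rw [frobeniusParameter_pow, ← pow_mul, ← sq, sub_sub_eq_add_sub, add_sub_right_comm] at hdvd
  exact (dvd_add_left dvd_rfl).mp hdvd

theorem equation_dvd_mul_parameter_pow_add_sub :
    equation p q a b x y ∣
      a * parameter p q a b x y ^ (p * q) + parameter p q a b x y - b * y := by
  have hdvd := (equation_dvd_parameter_pow_sub p q a b x y).trans (sub_dvd_pow_sub_pow _ _ q)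
  convert hdvd.mul_left a using 1
  rw [pow_mul]
  nth_rw 2 [parameter]
  ring

variable {p q a b x y} {u : A}

theorem frobeniusParameter_eq (hx : x = u ^ p ^ 2) (hy : b * y = a * u ^ (p * q) + u) :
    frobeniusParameter p q a b x y = u ^ p := by
  rw [frobeniusParameter, ← mul_pow, hy, add_pow_expChar, hx]
  ring

theorem equation_eq_zero (hx : x = u ^ p ^ 2) (hy : b * y = a * u ^ (p * q) + u) :
    equation p q a b x y = 0 := by
  have hpow := frobeniusParameter_pow p q a b x y
  rwa [frobeniusParameter_eq hx hy, ← pow_mul, ← sq, ← hx, eq_comm, sub_eq_self] at hpow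

theorem parameter_eq (hx : x = u ^ p ^ 2) (hy : b * y = a * u ^ (p * q) + u) :
    parameter p q a b x y = u := by
  rw [parameter, frobeniusParameter_eq hx hy, hy, pow_mul, add_sub_cancel_left]

end Parameter

section Parametrization

variable {R : Type*} [CommRing R] {p q : ℕ} [ExpChar R p] {a b : R} {x y : Polynomial R}

theorem adjoin_pair_eq_top (hx : x = Polynomial.X ^ p ^ 2)
    (hy : Polynomial.C b * y = Polynomial.C a * Polynomial.X ^ (p * q) + Polynomial.X) :
    Algebra.adjoin R {x, y} = ⊤ := by
  have : ExpChar (Polynomial R) p := expChar_of_injective_ringHom Polynomial.C_injective p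
  have hxS : x ∈ Algebra.adjoin R {x, y} := Algebra.subset_adjoin (by simp)
  have hyS : y ∈ Algebra.adjoin R {x, y} := Algebra.subset_adjoin (by simp)
  refine adjoin_eq_top_of_X_mem ?_
  rw [← parameter_eq hx hy]
  exact parameter_mem p q a b hxS hyS

theorem equation_mem_ker_aeval (hx : x = Polynomial.X ^ p ^ 2)
    (hy : Polynomial.C b * y = Polynomial.C a * Polynomial.X ^ (p * q) + Polynomial.X) :
    equation p q (C a) (C b) (X 0) (X 1) ∈
      RingHom.ker (aeval ![x, y] : MvPolynomial (Fin 2) R →ₐ[R] Polynomial R) := by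
  have : ExpChar (Polynomial R) p := expChar_of_injective_ringHom Polynomial.C_injective p
  rw [RingHom.mem_ker]
  simpa [equation] using equation_eq_zero hx hy

theorem ker_aeval_pair_eq_span (hb : IsUnit b) (hx : x = Polynomial.X ^ p ^ 2)
    (hy : Polynomial.C b * y = Polynomial.C a * Polynomial.X ^ (p * q) + Polynomial.X) :
    RingHom.ker (aeval ![x, y] : MvPolynomial (Fin 2) R →ₐ[R] Polynomial R) =
      Ideal.span {equation p q (C a) (C b) (X 0) (X 1)} := by
  have : ExpChar (MvPolynomial (Fin 2) R) p := expChar_of_injective_ringHom (C_injective _ _) p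
  let U : MvPolynomial (Fin 2) R := parameter p q (C a) (C b) (X 0) (X 1)
  have hyU : C b * Polynomial.aeval U y = C a * U ^ (p * q) + U := by
    simpa [algebraMap_eq] using congrArg (Polynomial.aeval U) hy
  refine ker_aeval_eq_of_sub_X_mem ?_ (Polynomial.aeval U) (Fin.forall_fin_two.mpr ⟨?_, ?_⟩)
  · rw [Ideal.span_singleton_le_iff_mem]
    exact equation_mem_ker_aeval hx hy
  · rw [Ideal.mem_span_singleton]
    simpa [hx] using equation_dvd_parameter_pow_sq_sub p q (C a) (C b) (X 0) (X 1)
  · rw [Ideal.mem_span_singleton, ← (hb.map C).dvd_mul_left, mul_sub]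
    simpa [hyU] using equation_dvd_mul_parameter_pow_add_sub p q (C a) (C b) (X 0) (X 1)

end Parametrization

end LineInPlane

theorem charP_embedding_line_in_plane_general
    {R : Type*} [CommRing R] (p : ℕ) [ExpChar R p] (a : R) (b : Rˣ) (q : ℕ) :
    Algebra.adjoin R
        {(Polynomial.X : Polynomial R) ^ p ^ 2,
         Polynomial.C (↑b⁻¹ : R) * (Polynomial.C a * Polynomial.X ^ (p * q) + Polynomial.X)} =
      (⊤ : Subalgebra R (Polynomial R)) ∧
    RingHom.ker (aeval
        ![(Polynomial.X : Polynomial R) ^ p ^ 2,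
          Polynomial.C (↑b⁻¹ : R) * (Polynomial.C a * Polynomial.X ^ (p * q) + Polynomial.X)] :
        MvPolynomial (Fin 2) R →ₐ[R] Polynomial R) =
      Ideal.span {X 0 + C (a ^ p ^ 2) * X 0 ^ (p * q) - C ((b : R) ^ p ^ 2) * X 1 ^ p ^ 2} := by
  have hy : Polynomial.C (b : R) * (Polynomial.C (↑b⁻¹ : R) *
      (Polynomial.C a * Polynomial.X ^ (p * q) + Polynomial.X)) =
      Polynomial.C a * Polynomial.X ^ (p * q) + Polynomial.X := by
    rw [← mul_assoc, ← Polynomial.C_mul, b.mul_inv, Polynomial.C_1, one_mul]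
  refine ⟨LineInPlane.adjoin_pair_eq_top rfl hy, ?_⟩
  simpa only [LineInPlane.equation, C_pow] using
    LineInPlane.ker_aeval_pair_eq_span b.isUnit rfl hy

/-- **Lemma 3.11 (Blanc–van Santen).** Let `k` be a field of characteristic `p > 0`,
`a ∈ k`, `b ∈ k*`, `q ≥ 0`. Then `u ↦ (u^{p²}, (1/b)(a·u^{pq} + u))` is a closed embedding
`𝔸¹ ↪ 𝔸²`: the subalgebra of `k[u]` generated by the two components is all of `k[u]`, and
the kernel of the corresponding map `k[x,y] → k[u]` is generated by
`x + a^{p²}·x^{pq} − b^{p²}·y^{p²}`. -/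
theorem charP_embedding_line_in_plane
    (k : Type*) [Field k] (p : ℕ) [CharP k p] (hp : 0 < p)
    (a : k) (b : k) (hb : b ≠ 0) (q : ℕ) :
    Algebra.adjoin k
        {(Polynomial.X : Polynomial k) ^ p ^ 2,
         Polynomial.C b⁻¹ * (Polynomial.C a * Polynomial.X ^ (p * q) + Polynomial.X)} =
      (⊤ : Subalgebra k (Polynomial k)) ∧
    RingHom.ker (aeval
        ![(Polynomial.X : Polynomial k) ^ p ^ 2,
          Polynomial.C b⁻¹ * (Polynomial.C a * Polynomial.X ^ (p * q) + Polynomial.X)] :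
        MvPolynomial (Fin 2) k →ₐ[k] Polynomial k) =
      Ideal.span {X 0 + C (a ^ p ^ 2) * X 0 ^ (p * q) - C (b ^ p ^ 2) * X 1 ^ p ^ 2} := by
  have : Fact p.Prime := ⟨CharP.char_prime_of_ne_zero k hp.ne'⟩
  exact charP_embedding_line_in_plane_general p a (Units.mk0 b hb) q
end
end

section
/- Let k be a field of characteristic p > 0, let q ≥ 2 be an integer that is not a multiple of p, let a ∈ k*, and let n ≥ 1. Consider the k-algebra homomorphism ρ* : k[y₁,…,y_{n+1}] → k[x₁,…,xₙ] defined by y₁ ↦ x₁^{p²}, y₂ ↦ a·x₁^{pq} + x₁, and y_{i+1} ↦ x_i for 2 ≤ i ≤ n (the comorphism of ρ : 𝔸ⁿ → 𝔸^{n+1}, (x₁,…,xₙ) ↦ (x₁^{p²}, a·x₁^{pq} + x₁, x₂,…,xₙ)). Then ρ* is surjective (ρ is a closed embedding), its kernel is the principal ideal generated by f = y₁ + a^{p²}·y₁^{pq} − y₂^{p²}, the polynomial f is not a variable of the k-algebra k[y₁,…,y_{n+1}], and in particular there is no k-algebra automorphism α of k[y₁,…,y_{n+1}] such that ρ* ∘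 α equals the comorphism of the standard embedding (x₁,…,xₙ) ↦ (x₁,…,xₙ,0) (i.e., ρ is not equivalent to the standard embedding 𝔸ⁿ ↪ 𝔸^{n+1}). -/
open MvPolynomial

noncomputable section

/-- The comorphism of `ρ : 𝔸ⁿ → 𝔸ⁿ⁺¹`,
`(x₁,…,xₙ) ↦ (x₁^{p²}, a·x₁^{pq} + x₁, x₂,…,xₙ)`: it sends
`y₁ ↦ x₁^{p²}`, `y₂ ↦ a·x₁^{pq} + x₁` and `y_{i+1} ↦ x_i` for `2 ≤ i`. -/
def rhoCharPStar (k : Type*) [Field k] (p q n : ℕ) (hn : 0 < n) (a : k) :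
    MvPolynomial (Fin (n + 1)) k →ₐ[k] MvPolynomial (Fin n) k :=
  aeval (fun i : Fin (n + 1) =>
    if (i : ℕ) = 0 then X ⟨0, hn⟩ ^ p ^ 2
    else if (i : ℕ) = 1 then C a * X ⟨0, hn⟩ ^ (p * q) + X ⟨0, hn⟩
    else X ⟨(i : ℕ) - 1, by have := i.isLt; omega⟩)

/-- The comorphism of the standard embedding `𝔸ⁿ ↪ 𝔸ⁿ⁺¹`,
`(x₁,…,xₙ) ↦ (x₁,…,xₙ,0)`: it sends `y_i ↦ x_i` for `i ≤ n` and `y_{n+1} ↦ 0`. -/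
def stdEmbStar (k : Type*) [Field k] (n : ℕ) :
    MvPolynomial (Fin (n + 1)) k →ₐ[k] MvPolynomial (Fin n) k :=
  aeval (fun i : Fin (n + 1) =>
    if h : (i : ℕ) < n then X ⟨(i : ℕ), h⟩ else 0)

/-! Write `f = y₁ + a^{p²}·y₁^{pq} − y₂^{p²} = y₁ − g^p` with `g = y₂^p − a^p·y₁^q`. On the image
of `ρ` the polynomial `g` restricts to `x₁^p`, so `s = y₂ − a·g^q` restricts to `x₁`. Conversely,
modulo `f` one has `s^p = y₂^p − a^p·(g^p)^q = g`, hence `y₁ = s^{p²}` and `y₂ = a·s^{pq} + s`;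
therefore `x₁ ↦ s` inverts `ρ*` modulo `f`.

If `f` were a variable, then, restricting to a coordinate line, `f(Y, Z)` would have degree one for
suitable univariate polynomials `Y` and `Z`. Differentiating, with `g` now denoting `g(Y, Z)`, `Y'`
is a nonzero constant and `g'` is a nonzero multiple of `Y^{q-1}`, so that
`deg g > (q - 1) deg Y ≥ deg Y > 0`. But `g^p = Y − f(Y, Z)` gives `p · deg g ≤ deg Y`. -/

open scoped Polynomial

section Kernel

variable {σ R B : Type*} [CommRing R] [Semiring B] [Algebra R B]

theorem ker_le_of_forall_X_sub_mem (φ : MvPolynomial σ R →ₐ[R] B)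
    (ψ : B →ₐ[R] MvPolynomial σ R) (I : Ideal (MvPolynomial σ R))
    (h : ∀ i, X i - ψ (φ (X i)) ∈ I) : RingHom.ker φ ≤ I := by
  have hcomp : Ideal.Quotient.mkₐ R I = (Ideal.Quotient.mkₐ R I).comp (ψ.comp φ) :=
    algHom_ext fun i => Ideal.Quotient.eq.2 (h i)
  intro f hf
  have hmk := DFunLike.congr_fun hcomp f
  rw [AlgHom.comp_apply, AlgHom.comp_apply, RingHom.mem_ker.1 hf, map_zero, map_zero] at hmk
  exact Ideal.Quotient.eq_zero_iff_mem.1 hmk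

theorem associated_symm_apply_X_of_ker_eq_span [IsDomain R] [Nontrivial B]
    {φ : MvPolynomial σ R →ₐ[R] B} {f : MvPolynomial σ R} (hker : RingHom.ker φ = Ideal.span {f})
    {α : MvPolynomial σ R ≃ₐ[R] MvPolynomial σ R} {i : σ} (hα : φ (α (X i)) = 0) :
    Associated (α.symm f) (X i) := by
  have hdvd : α.symm f ∣ X i := by
    rw [← α.symm_apply_apply (X i)]
    refine map_dvd α.symm (Ideal.mem_span_singleton.1 ?_)
    rwa [← hker, RingHom.mem_ker]
  have hnonunit : ¬ IsUnit (α.symm f) := by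
    intro hunit
    have hf : φ f = 0 := by
      rw [← RingHom.mem_ker, hker]
      exact Ideal.mem_span_singleton_self f
    have hφ := (hunit.map α).map φ
    rw [α.apply_symm_apply, hf] at hφ
    exact not_isUnit_zero hφ
  exact ((X_prime.irreducible.dvd_iff.1 hdvd).resolve_left hnonunit).symm

end Kernel

section Identities

variable {A B : Type*} [CommRing A] [CommRing B] (p q : ℕ)

/-- The equation `f = y + a^{p²}·y^{pq} − z^{p²}` of the image of `ρ`, in the coordinates
`y = y₁` and `z = y₂`, which are arbitrary ring elements so that `f` can be restricted to curves. -/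
def rhoEquation (a y z : A) : A :=
  y + a ^ p ^ 2 * y ^ (p * q) - z ^ p ^ 2

/-- The function `g = z^p − a^p·y^q`, which restricts to `x₁^p` on the image of `ρ`. -/
def rhoPthPower (a y z : A) : A :=
  z ^ p - a ^ p * y ^ q

/-- The function `s = z − a·g^q`, which restricts to the parameter `x₁` on the image of `ρ`. -/
def rhoParameter (a y z : A) : A :=
  z - a * rhoPthPower p q a y z ^ q

theorem map_rhoEquation {F : Type*} [FunLike F A B] [RingHomClass F A B] (φ : F) (a y z : A) :
    φ (rhoEquation p q a y z) = rhoEquation p q (φ a) (φ y) (φ z) := by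
  simp only [rhoEquation, map_sub, map_add, map_mul, map_pow]

theorem map_rhoParameter {F : Type*} [FunLike F A B] [RingHomClass F A B] (φ : F) (a y z : A) :
    φ (rhoParameter p q a y z) = rhoParameter p q (φ a) (φ y) (φ z) := by
  simp only [rhoParameter, rhoPthPower, map_sub, map_mul, map_pow]

variable [ExpChar A p] (a x y z : A)

theorem rhoEquation_eq_sub_rhoPthPower_pow :
    rhoEquation p q a y z = y - rhoPthPower p q a y z ^ p := by
  rw [rhoEquation, rhoPthPower, sub_pow_expChar]
  ring

theorem rhoPthPower_apply_curve :
    rhoPthPower p q a (x ^ p ^ 2) (a * x ^ (p * q) + x) = x ^ p := by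
  rw [rhoPthPower, add_pow_expChar]
  ring

theorem rhoParameter_apply_curve :
    rhoParameter p q a (x ^ p ^ 2) (a * x ^ (p * q) + x) = x := by
  rw [rhoParameter, rhoPthPower_apply_curve, pow_mul, add_sub_cancel_left]

theorem rhoEquation_apply_curve :
    rhoEquation p q a (x ^ p ^ 2) (a * x ^ (p * q) + x) = 0 := by
  rw [rhoEquation_eq_sub_rhoPthPower_pow, rhoPthPower_apply_curve, ← pow_mul, ← sq, sub_self]

theorem rhoEquation_dvd_rhoPthPower_sub_rhoParameter_pow :
    rhoEquation p q a y z ∣ rhoPthPower p q a y z - rhoParameter p q a y z ^ p := by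
  set g := rhoPthPower p q a y z with hg
  have hdiff : g - rhoParameter p q a y z ^ p = -(a ^ p * (y ^ q - (g ^ p) ^ q)) := by
    rw [rhoParameter, ← hg, sub_pow_expChar, mul_pow, hg, rhoPthPower]
    ring
  rw [rhoEquation_eq_sub_rhoPthPower_pow, hdiff]
  exact ((sub_dvd_pow_sub_pow _ _ q).mul_left _).neg_right

theorem rhoEquation_dvd_sub_rhoParameter_pow :
    rhoEquation p q a y z ∣ y - rhoParameter p q a y z ^ p ^ 2 := by
  have hsplit : y - rhoParameter p q a y z ^ p ^ 2 = rhoEquation p q a y z +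
      (rhoPthPower p q a y z - rhoParameter p q a y z ^ p) ^ p := by
    rw [rhoEquation_eq_sub_rhoPthPower_pow, sub_pow_expChar]
    ring
  rw [hsplit]
  exact dvd_rfl.add (dvd_pow (rhoEquation_dvd_rhoPthPower_sub_rhoParameter_pow p q a y z)
    (expChar_ne_zero A p))

theorem rhoEquation_dvd_sub_curve_rhoParameter :
    rhoEquation p q a y z ∣
      z - (a * rhoParameter p q a y z ^ (p * q) + rhoParameter p q a y z) := by
  have hfactor : z - (a * rhoParameter p q a y z ^ (p * q) + rhoParameter p q a y z) =
      a * (rhoPthPower p q a y z ^ q - (rhoParameter p q a y z ^ p) ^ q) := by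
    rw [← pow_mul]
    nth_rewrite 2 [rhoParameter]
    ring
  rw [hfactor]
  exact ((rhoEquation_dvd_rhoPthPower_sub_rhoParameter_pow p q a y z).trans
    (sub_dvd_pow_sub_pow _ _ q)).mul_left a

end Identities

section NotVariable

variable {R : Type*} [CommRing R] (p q : ℕ) [CharP R p] (a : R)

theorem derivative_rhoPthPower (Y Z : R[X]) :
    Polynomial.derivative (rhoPthPower p q (Polynomial.C a) Y Z) =
      Polynomial.C (-(a ^ p * q)) * Y ^ (q - 1) * Polynomial.derivative Y := by
  simp only [rhoPthPower, ← Polynomial.C_pow, Polynomial.derivative_sub,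
    Polynomial.derivative_C_mul, Polynomial.derivative_pow, CharP.cast_eq_zero,
    Polynomial.C_neg, Polynomial.C_mul, map_zero, zero_mul, zero_sub, mul_assoc, neg_mul]

theorem derivative_rhoEquation [Fact p.Prime] (Y Z : R[X]) :
    Polynomial.derivative (rhoEquation p q (Polynomial.C a) Y Z) = Polynomial.derivative Y := by
  rw [rhoEquation_eq_sub_rhoPthPower_pow, Polynomial.derivative_sub, Polynomial.derivative_pow,
    CharP.cast_eq_zero, map_zero, zero_mul, zero_mul, sub_zero]

variable {p q a} [IsDomain R]

theorem natDegree_lt_natDegree_rhoPthPower (hq : 2 ≤ q) (hpq : ¬ p ∣ q) (ha : a ≠ 0)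
    {Y : R[X]} (hY : Polynomial.derivative Y ≠ 0) (Z : R[X]) :
    Y.natDegree < (rhoPthPower p q (Polynomial.C a) Y Z).natDegree := by
  set g := rhoPthPower p q (Polynomial.C a) Y Z
  have hdg : Polynomial.derivative g =
      Polynomial.C (-(a ^ p * q)) * Y ^ (q - 1) * Polynomial.derivative Y :=
    derivative_rhoPthPower p q a Y Z
  have hcoeff : -(a ^ p * q) ≠ 0 := by
    have hqR : (q : R) ≠ 0 := by rwa [Ne, CharP.cast_eq_zero_iff R p]
    exact neg_ne_zero.2 (mul_ne_zero (pow_ne_zero p ha) hqR)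
  have hYpow : Y ^ (q - 1) ≠ 0 := by
    refine pow_ne_zero _ ?_
    rintro rfl
    exact hY Polynomial.derivative_zero
  have hfactor : Polynomial.C (-(a ^ p * q)) * Y ^ (q - 1) ≠ 0 :=
    mul_ne_zero (Polynomial.C_ne_zero.2 hcoeff) hYpow
  have hg : g.natDegree ≠ 0 := fun h =>
    mul_ne_zero hfactor hY (hdg ▸ Polynomial.derivative_of_natDegree_zero h)
  calc Y.natDegree ≤ (q - 1) * Y.natDegree := Nat.le_mul_of_pos_left _ (by omega)
    _ ≤ (q - 1) * Y.natDegree + (Polynomial.derivative Y).natDegree := Nat.le_add_right _ _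
    _ = (Polynomial.derivative g).natDegree := by
      rw [hdg, Polynomial.natDegree_mul hfactor hY, Polynomial.natDegree_C_mul hcoeff,
        Polynomial.natDegree_pow]
    _ < g.natDegree := Polynomial.natDegree_derivative_lt hg

variable [Fact p.Prime]

theorem natDegree_rhoEquation_ne_one (hq : 2 ≤ q) (hpq : ¬ p ∣ q) (ha : a ≠ 0) (Y Z : R[X]) :
    (rhoEquation p q (Polynomial.C a) Y Z).natDegree ≠ 1 := by
  intro hdeg
  set g := rhoPthPower p q (Polynomial.C a) Y Z
  have hdY : Polynomial.derivative Y ≠ 0 := by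
    obtain ⟨c, hc, d, hcd⟩ := Polynomial.natDegree_eq_one.1 hdeg
    rw [← derivative_rhoEquation p q a Y Z, ← hcd, Polynomial.derivative_add,
      Polynomial.derivative_C_mul, Polynomial.derivative_X, Polynomial.derivative_C, mul_one,
      add_zero]
    exact Polynomial.C_ne_zero.2 hc
  have hYdeg : 1 ≤ Y.natDegree :=
    Nat.one_le_iff_ne_zero.2 (mt Polynomial.derivative_of_natDegree_zero hdY)
  have hgp : g ^ p = Y - rhoEquation p q (Polynomial.C a) Y Z := by
    rw [rhoEquation_eq_sub_rhoPthPower_pow, sub_sub_cancel]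
  have hgY : g.natDegree ≤ Y.natDegree := calc
    g.natDegree ≤ p * g.natDegree := Nat.le_mul_of_pos_left _ (Fact.out : p.Prime).pos
    _ = (Y - rhoEquation p q (Polynomial.C a) Y Z).natDegree := by
      rw [← Polynomial.natDegree_pow, hgp]
    _ ≤ max Y.natDegree 1 := hdeg ▸ Polynomial.natDegree_sub_le _ _
    _ = Y.natDegree := max_eq_left hYdeg
  exact (natDegree_lt_natDegree_rhoPthPower hq hpq ha hdY Z).not_ge hgY

theorem not_associated_rhoEquation_X (hq : 2 ≤ q) (hpq : ¬ p ∣ q) (ha : a ≠ 0) {σ : Type*}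
    (y z : MvPolynomial σ R) (i : σ) : ¬ Associated (rhoEquation p q (C a) y z) (X i) := by
  intro h
  have hline := h.map (aeval fun _ : σ => (Polynomial.X : R[X]))
  rw [map_rhoEquation, aeval_X, aeval_C, Polynomial.algebraMap_eq] at hline
  apply natDegree_rhoEquation_ne_one hq hpq ha (aeval (fun _ => Polynomial.X) y)
    (aeval (fun _ => Polynomial.X) z)
  rw [Polynomial.natDegree_eq_of_degree_eq (Polynomial.degree_eq_degree_of_associated hline),
    Polynomial.natDegree_X]

end NotVariable

section Embedding

theorem stdEmbStar_X_last (k : Type*) [Field k] (n : ℕ) :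
    stdEmbStar k n (X (Fin.last n)) = 0 := by
  simp [stdEmbStar]

variable {k : Type*} [Field k] (p q m : ℕ) (a : k)

theorem rhoCharPStar_X_zero :
    rhoCharPStar k p q (m + 1) m.succ_pos a (X 0) = X 0 ^ p ^ 2 := by
  simp [rhoCharPStar]

theorem rhoCharPStar_X_one :
    rhoCharPStar k p q (m + 1) m.succ_pos a (X 1) = C a * X 0 ^ (p * q) + X 0 := by
  simp [rhoCharPStar]

theorem rhoCharPStar_X_succ_succ (j : Fin m) :
    rhoCharPStar k p q (m + 1) m.succ_pos a (X j.succ.succ) = X j.succ := by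
  rw [rhoCharPStar, aeval_X, if_neg (by simp), if_neg (by simp)]
  rfl

variable [ExpChar k p]

theorem rhoCharPStar_rhoParameter :
    rhoCharPStar k p q (m + 1) m.succ_pos a (rhoParameter p q (C a) (X 0) (X 1)) = X 0 := by
  rw [map_rhoParameter, rhoCharPStar_X_zero, rhoCharPStar_X_one, algHom_C, algebraMap_eq,
    rhoParameter_apply_curve]

theorem rhoCharPStar_rhoEquation :
    rhoCharPStar k p q (m + 1) m.succ_pos a (rhoEquation p q (C a) (X 0) (X 1)) = 0 := by
  rw [map_rhoEquation, rhoCharPStar_X_zero, rhoCharPStar_X_one, algHom_C, algebraMap_eq,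
    rhoEquation_apply_curve]

theorem rhoCharPStar_surjective :
    Function.Surjective (rhoCharPStar k p q (m + 1) m.succ_pos a) := by
  rw [← AlgHom.range_eq_top, eq_top_iff, ← adjoin_range_X, Algebra.adjoin_le_iff]
  rintro _ ⟨i, rfl⟩
  cases i using Fin.cases with
  | zero => exact ⟨_, rhoCharPStar_rhoParameter p q m a⟩
  | succ j => exact ⟨_, rhoCharPStar_X_succ_succ p q m a j⟩

theorem ker_rhoCharPStar :
    RingHom.ker (rhoCharPStar k p q (m + 1) m.succ_pos a) =
      Ideal.span {rhoEquation p q (C a) (X 0) (X 1)} := by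
  apply le_antisymm
  · let s : MvPolynomial (Fin (m + 2)) k := rhoParameter p q (C a) (X 0) (X 1)
    let lift : MvPolynomial (Fin (m + 1)) k →ₐ[k] MvPolynomial (Fin (m + 2)) k :=
      aeval (Fin.cons s fun j => X j.succ.succ)
    have lift_X_zero : lift (X 0) = s := aeval_X _ _
    have lift_X_succ (j : Fin m) : lift (X j.succ) = X j.succ.succ := aeval_X _ _
    refine ker_le_of_forall_X_sub_mem _ lift _ fun i => Ideal.mem_span_singleton.2 ?_
    cases i using Fin.cases with
    | zero =>
      rw [rhoCharPStar_X_zero, map_pow, lift_X_zero]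
      exact rhoEquation_dvd_sub_rhoParameter_pow p q _ _ _
    | succ i =>
      cases i using Fin.cases with
      | zero =>
        rw [Fin.succ_zero_eq_one, rhoCharPStar_X_one, map_add, map_mul, map_pow, algHom_C,
          lift_X_zero]
        exact rhoEquation_dvd_sub_curve_rhoParameter p q _ _ _
      | succ j => rw [rhoCharPStar_X_succ_succ, lift_X_succ, sub_self]; exact dvd_zero _
  · rw [Ideal.span_singleton_le_iff_mem, RingHom.mem_ker, rhoCharPStar_rhoEquation]

end Embedding

/-- **Proposition 3.13 (Blanc–van Santen).** Let `k` be a field of characteristic `p > 0`,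
`q ≥ 2` not a multiple of `p`, `a ∈ k*` and `n ≥ 1`. Then
`ρ : 𝔸ⁿ ↪ 𝔸ⁿ⁺¹`, `(x₁,…,xₙ) ↦ (x₁^{p²}, a·x₁^{pq}+x₁, x₂,…,xₙ)`, is a closed embedding whose
image is the hypersurface `f = y₁ + a^{p²}·y₁^{pq} − y₂^{p²} = 0`; the polynomial `f` is not
a variable of `k[y₁,…,y_{n+1}]`, and `ρ` is not equivalent to the standard embedding. -/
theorem charP_nonstandard_embedding
    (k : Type*) [Field k] (p : ℕ) [CharP k p] (hp : 0 < p)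
    (q : ℕ) (hq : 2 ≤ q) (hpq : ¬ p ∣ q) (a : k) (ha : a ≠ 0)
    (n : ℕ) (hn : 0 < n) :
    Function.Surjective (rhoCharPStar k p q n hn a) ∧
    RingHom.ker (rhoCharPStar k p q n hn a) =
      Ideal.span {(X 0 : MvPolynomial (Fin (n + 1)) k) + C (a ^ p ^ 2) * X 0 ^ (p * q) -
        X 1 ^ p ^ 2} ∧
    (¬ ∃ α : MvPolynomial (Fin (n + 1)) k ≃ₐ[k] MvPolynomial (Fin (n + 1)) k,
        α ((X 0 : MvPolynomial (Fin (n + 1)) k) + C (a ^ p ^ 2) * X 0 ^ (p * q) -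
          X 1 ^ p ^ 2) = X 0) ∧
    (¬ ∃ α : MvPolynomial (Fin (n + 1)) k ≃ₐ[k] MvPolynomial (Fin (n + 1)) k,
        (rhoCharPStar k p q n hn a).comp α.toAlgHom = stdEmbStar k n) := by
  have : Fact p.Prime := ⟨(CharP.char_is_prime_or_zero k p).resolve_right hp.ne'⟩
  obtain ⟨m, rfl⟩ := Nat.exists_eq_succ_of_ne_zero hn.ne'
  have hf : (X 0 : MvPolynomial (Fin (m + 1 + 1)) k) + C (a ^ p ^ 2) * X 0 ^ (p * q) -
      X 1 ^ p ^ 2 = rhoEquation p q (C a) (X 0) (X 1) := by rw [rhoEquation, C_pow]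
  have not_associated (β : MvPolynomial (Fin (m + 1 + 1)) k ≃ₐ[k] MvPolynomial (Fin (m + 1 + 1)) k)
      (i : Fin (m + 1 + 1)) : ¬ Associated (β (rhoEquation p q (C a) (X 0) (X 1))) (X i) := by
    rw [← algebraMap_eq, map_rhoEquation, β.commutes, algebraMap_eq]
    exact not_associated_rhoEquation_X hq hpq ha _ _ i
  simp only [Nat.succ_eq_add_one, hf]
  refine ⟨rhoCharPStar_surjective p q m a, ker_rhoCharPStar p q m a, ?_, ?_⟩
  · rintro ⟨α, hα⟩
    exact not_associated α 0 (by rw [hα])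
  · rintro ⟨α, hα⟩
    have hlast : rhoCharPStar k p q (m + 1) hn a (α (X (Fin.last _))) = 0 :=
      (DFunLike.congr_fun hα _).trans (stdEmbStar_X_last k _)
    exact not_associated α.symm _
      (associated_symm_apply_X_of_ker_eq_span (ker_rhoCharPStar p q m a) hlast)
end
end
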